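/- Let H be a complex Hilbert space with dim H ≥ 3 and let φ : B_s(H) → B_s(H) be an additive surjective map such that for all A, B ∈ B_s(H), AB = BA if and only if φ(A)φ(B) = φ(B)φ(A). Then there exist a nonzero real scalar c, an operator U on H that is either unitary or antiunitary, and an additive function g : B_s(H) → ℝ such that φ(A) = c·U A U* + g(A)·I for all A ∈ B_s(H). -/

import Mathlib

noncomputable section

variable {H : Type*} [NormedAddCommGroup H] [InnerProductSpace ℂ H] [CompleteSpace H]

/-- `A ↔_c B`: the self-adjoint operators `A` and `B` commute. -/
def CommC (A B : selfAdjoint (H →L[ℂ] H)) : Prop :=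
  (A : H →L[ℂ] H) * (B : H →L[ℂ] H) = (B : H →L[ℂ] H) * (A : H →L[ℂ] H)

open InnerProductSpace

local notation "⟪" x "," y "⟫" => inner ℂ x y

namespace CommPres

/-- The space of bounded self-adjoint operators. -/
abbrev SA (H : Type*) [NormedAddCommGroup H] [InnerProductSpace ℂ H] [CompleteSpace H] :=
  selfAdjoint (H →L[ℂ] H)

instance : Module ℝ (SA H) := selfAdjoint.instModuleSubtypeMemAddSubgroupOfStarModule

instance : DistribMulAction ℝ (SA H) := Module.toDistribMulAction

instance : MulAction ℝ (SA H) := DistribMulAction.toMulAction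

instance : DistribSMul ℝ (SA H) := DistribMulAction.toDistribSMul

instance : SMulZeroClass ℝ (SA H) := DistribSMul.toSMulZeroClass

instance : SMulWithZero ℝ (SA H) := Module.toMulActionWithZero.toSMulWithZero

/-- Evaluation of a self-adjoint operator at a vector. -/
def ev (A : SA H) (x : H) : H := (A : H →L[ℂ] H) x

lemma ev_add (A B : SA H) (x : H) : ev (A + B) x = ev A x + ev B x := rfl

lemma ev_sub (A B : SA H) (x : H) : ev (A - B) x = ev A x - ev B x := rfl

lemma ev_zero (x : H) : ev (0 : SA H) x = 0 := rfl

lemma ev_one (x : H) : ev (1 : SA H) x = x := rfl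

lemma ev_smul (t : ℝ) (A : SA H) (x : H) : ev (t • A) x = (t : ℂ) • ev A x := by
  simp [ev]

lemma ev_map_add (A : SA H) (x y : H) : ev A (x + y) = ev A x + ev A y := map_add _ _ _

lemma ev_map_sub (A : SA H) (x y : H) : ev A (x - y) = ev A x - ev A y := map_sub _ _ _

lemma ev_map_zero (A : SA H) : ev A 0 = 0 := map_zero _

lemma ev_map_smul (A : SA H) (c : ℂ) (x : H) : ev A (c • x) = c • ev A x := map_smul _ _ _

@[ext] lemma SA.ext {A B : SA H} (h : ∀ x, ev A x = ev B x) : A = B :=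
  Subtype.ext (ContinuousLinearMap.ext h)

lemma ev_symm (A : SA H) (x y : H) : ⟪ev A x, y⟫ = ⟪x, ev A y⟫ :=
  A.2.isSymmetric x y

lemma commC_iff {A B : SA H} : CommC A B ↔ ∀ x, ev A (ev B x) = ev B (ev A x) :=
  ContinuousLinearMap.ext_iff

lemma CommC.symm' {A B : SA H} (h : CommC A B) : CommC B A := Eq.symm h

/-- The operator `z ↦ ⟪x, z⟫ x`. -/
def D (x : H) : SA H := ⟨rankOne ℂ x x, (isPositive_rankOne_self x).isSelfAdjoint⟩

lemma ev_D (x z : H) : ev (D x) z = ⟪x, z⟫ • x := rfl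

/-- Self-adjoint operators that are real scalars. -/
def IsScal (A : SA H) : Prop := ∃ r : ℝ, A = r • (1 : SA H)

/-- Membership of `B` in the bicommutant of `A`. -/
def Sub (B A : SA H) : Prop := ∀ C, CommC A C → CommC B C

/-- Operators of the form `a P + b` for a projection `P`. -/
def Two (A : SA H) : Prop :=
  ∃ (P : SA H) (a b : ℝ), (∀ x, ev P (ev P x) = ev P x) ∧ A = a • P + b • (1 : SA H)

lemma exists_real_of_smul (A : SA H) {x : H} {c : ℂ} (h : ev A x = c • x) :
    ∃ r : ℝ, ev A x = (r : ℂ) • x := by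
  by_cases hx : x = 0
  · exact ⟨0, by simp [hx, ev_map_zero]⟩
  · have h1 := ev_symm A x x
    rw [h, inner_smul_left, inner_smul_right] at h1
    have h2 : (starRingEnd ℂ) c = c := mul_right_cancel₀ (inner_self_ne_zero.mpr hx) h1
    obtain ⟨r, hr⟩ := Complex.conj_eq_iff_real.mp h2
    exact ⟨r, by rw [h, hr]⟩

lemma commC_D_iff (A : SA H) (x : H) : CommC A (D x) ↔ ∃ r : ℝ, ev A x = (r : ℂ) • x := by
  constructor
  · intro h
    by_cases hx : x = 0
    · exact ⟨0, by simp [hx, ev_map_zero]⟩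
    have h1 := commC_iff.mp h x
    rw [ev_D, ev_D, ev_map_smul] at h1
    have hne : ⟪x, x⟫ ≠ 0 := inner_self_ne_zero.mpr hx
    apply exists_real_of_smul A (c := ⟪x, x⟫⁻¹ * ⟪x, ev A x⟫)
    rw [mul_smul, ← h1, smul_smul, inv_mul_cancel₀ hne, one_smul]
  · rintro ⟨r, hr⟩
    refine commC_iff.mpr fun z => ?_
    rw [ev_D, ev_D, ev_map_smul, hr, ← ev_symm, hr, inner_smul_left, smul_smul, Complex.conj_ofReal,
      mul_comm]

omit [CompleteSpace H] in
/-- If two semilinear maps are pointwise proportional on a subspace and one of them is injective,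
then the proportionality factor is constant. -/
lemma exists_scalar {σ : ℂ →+* ℂ} (hσ : Function.Surjective σ) {T U : H → H}
    (hT : ∀ x y, T (x + y) = T x + T y) (hT' : ∀ (c : ℂ) x, T (c • x) = σ c • T x)
    (hU : ∀ x y, U (x + y) = U x + U y) (hU' : ∀ (c : ℂ) x, U (c • x) = σ c • U x)
    (hU0 : Function.Injective U) (V : Submodule ℂ H)
    (h : ∀ x ∈ V, ∃ r : ℝ, T x = (r : ℂ) • U x) : ∃ r : ℝ, ∀ x ∈ V, T x = (r : ℂ) • U x := by
  have hz : U 0 = 0 := by simpa using hU' 0 0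
  by_cases hV : ∃ x ∈ V, x ≠ 0
  · obtain ⟨x, hx, hx0⟩ := hV
    have hUx : U x ≠ 0 := fun h0 => hx0 (hU0 (h0.trans hz.symm))
    obtain ⟨r, hr⟩ := h x hx
    refine ⟨r, fun y hy => ?_⟩
    obtain ⟨s, hs⟩ := h y hy
    obtain ⟨q, hq⟩ := h (x + y) (V.add_mem hx hy)
    rw [hT, hU, hr, hs] at hq
    by_cases hsq : (s : ℂ) = q
    · have : ((r : ℂ) - q) • U x = 0 := by
        linear_combination (norm := module) hq - hsq • U y
      rw [hs, hsq, sub_eq_zero.mp ((smul_eq_zero.mp this).resolve_right hUx)]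
    · have hne : (s : ℂ) - q ≠ 0 := sub_ne_zero.mpr hsq
      obtain ⟨c, hc⟩ := hσ (((s : ℂ) - q)⁻¹ * (q - r))
      have hy' : y = c • x := hU0 <| by
        rw [hU', hc, mul_smul, eq_inv_smul_iff₀ hne]
        linear_combination (norm := module) hq
      rw [hy', hT', hU', hr, smul_comm]
  · push Not at hV
    exact ⟨0, fun x hx => by simpa [hV x hx, hz] using hT' 0 0⟩

lemma exists_scalar_on (A : SA H) (V : Submodule ℂ H)
    (h : ∀ x ∈ V, ∃ r : ℝ, ev A x = (r : ℂ) • x) : ∃ r : ℝ, ∀ x ∈ V, ev A x = (r : ℂ) • x :=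
  exists_scalar (σ := RingHom.id ℂ) (U := id) Function.surjective_id (ev_map_add A) (ev_map_smul A)
    (fun _ _ => rfl) (fun _ _ => rfl) Function.injective_id V h

lemma isScal_iff {A : SA H} : IsScal A ↔ ∀ B, CommC A B := by
  constructor
  · rintro ⟨r, rfl⟩ B
    refine commC_iff.mpr fun x => ?_
    rw [ev_smul, ev_smul, ev_one, ev_one, ev_map_smul]
  · intro h
    obtain ⟨r, hr⟩ := exists_scalar_on A ⊤ fun x _ => (commC_D_iff A x).mp (h (D x))
    exact ⟨r, SA.ext fun x => by rw [hr x trivial, ev_smul, ev_one]⟩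

lemma Sub.refl (A : SA H) : Sub A A := fun _ h => h

lemma Sub.trans {A B C : SA H} (h : Sub A B) (h' : Sub B C) : Sub A C := fun _ hX => h _ (h' _ hX)

lemma Sub.smul_add {A P : SA H} (h : Sub A P) (a b : ℝ) : Sub (a • A + b • (1 : SA H)) P := by
  intro C hC
  have := commC_iff.mp (h C hC)
  refine commC_iff.mpr fun x => ?_
  simp only [ev_add, ev_smul, ev_one, ev_map_add, ev_map_smul, this]

lemma sub_smul_add (A : SA H) {a : ℝ} (ha : a ≠ 0) (b : ℝ) : Sub A (a • A + b • (1 : SA H)) := by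
  have := (Sub.refl (a • A + b • (1 : SA H))).smul_add a⁻¹ (- (a⁻¹ * b))
  rwa [show a⁻¹ • (a • A + b • (1 : SA H)) + (-(a⁻¹ * b)) • (1 : SA H) = A from
    SA.ext fun x => by
      have ha' : (a : ℂ) ≠ 0 := by exact_mod_cast ha
      simp only [ev_add, ev_smul, ev_one]
      push_cast
      match_scalars
      · field_simp
      · ring] at this

lemma Sub.eq_of_proj {B P : SA H} (hP : ∀ x, ev P (ev P x) = ev P x) (h : Sub B P) :
    ∃ a b : ℝ, B = a • P + b • (1 : SA H) := by
  obtain ⟨r, hr⟩ := exists_scalar_on B (LinearMap.range ((P : H →L[ℂ] H) : H →ₗ[ℂ] H)) (by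
    rintro _ ⟨x, rfl⟩
    refine (commC_D_iff _ _).mp (h _ ((commC_D_iff _ _).mpr ⟨1, ?_⟩))
    simpa [ev] using hP x)
  obtain ⟨s, hs⟩ := exists_scalar_on B (LinearMap.ker ((P : H →L[ℂ] H) : H →ₗ[ℂ] H)) (by
    intro x hx
    refine (commC_D_iff _ _).mp (h _ ((commC_D_iff _ _).mpr ⟨0, ?_⟩))
    simpa [ev] using hx)
  refine ⟨r - s, s, SA.ext fun x => ?_⟩
  have h1 := hr (ev P x) ⟨x, rfl⟩
  have h2 := hs (x - ev P x) (by
    change ev P (x - ev P x) = 0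
    rw [ev_map_sub, hP, sub_self])
  rw [ev_map_sub, h1] at h2
  rw [ev_add, ev_smul, ev_smul, ev_one]
  push_cast
  linear_combination (norm := module) h2

lemma IsScal.of_sub {A B : SA H} (hA : IsScal A) (h : Sub B A) : IsScal B :=
  isScal_iff.mpr fun C => h C (isScal_iff.mp hA C)

lemma not_isScal_iff_exists {A : SA H} : ¬ IsScal A ↔ ∃ x, ¬ ∃ r : ℝ, ev A x = (r : ℂ) • x := by
  constructor
  · intro h
    by_contra! h'
    obtain ⟨r, hr⟩ := exists_scalar_on A ⊤ fun x _ => h' x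
    exact h ⟨r, SA.ext fun x => by rw [hr x trivial, ev_smul, ev_one]⟩
  · rintro ⟨x, hx⟩ ⟨r, rfl⟩
    exact hx ⟨r, by rw [ev_smul, ev_one]⟩

lemma ev_eq_zero_of_nonneg {T : H →L[ℂ] H} (hT : 0 ≤ T) {x : H} (hx : ⟪T x, x⟫ = 0) : T x = 0 := by
  have h1 : CFC.sqrt T * CFC.sqrt T = T := CFC.sqrt_mul_sqrt_self T hT
  have h2 : IsSelfAdjoint (CFC.sqrt T) := (CFC.sqrt_nonneg T).isSelfAdjoint
  have h3 : CFC.sqrt T x = 0 := by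
    rw [← inner_self_eq_zero (𝕜 := ℂ)]
    have h4 : ⟪CFC.sqrt T (CFC.sqrt T x), x⟫ = ⟪CFC.sqrt T x, CFC.sqrt T x⟫ := h2.isSymmetric _ _
    rw [← h4, ← mul_apply_eq_comp, h1, hx]
  rw [← h1, mul_apply_eq_comp, h3, map_zero]

lemma commute_posPart {A C : H →L[ℂ] H} (h : Commute A C) : Commute A⁺ C := by
  rw [CFC.posPart_def]
  exact h.cfcₙ_real _

lemma commute_negPart {A C : H →L[ℂ] H} (h : Commute A C) : Commute A⁻ C := by
  rw [CFC.negPart_def]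
  exact h.cfcₙ_real _

lemma exists_pos_neg_parts (A : SA H) : ∃ F G : SA H, A = F - G ∧
    (∀ x, ev F (ev G x) = 0) ∧ (∀ x, ev G (ev F x) = 0) ∧ Sub F A ∧ Sub G A ∧
    (∀ x, ⟪ev F x, x⟫ = 0 → ev F x = 0) ∧ (∀ x, ⟪ev G x, x⟫ = 0 → ev G x = 0) := by
  refine ⟨⟨(A : H →L[ℂ] H)⁺, (CFC.posPart_nonneg _).isSelfAdjoint⟩,
    ⟨(A : H →L[ℂ] H)⁻, (CFC.negPart_nonneg _).isSelfAdjoint⟩, ?_, ?_, ?_, ?_, ?_, ?_, ?_⟩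
  · exact Subtype.ext (CFC.posPart_sub_negPart _ A.2).symm
  · exact fun x => congrArg (fun T : H →L[ℂ] H => T x) (CFC.posPart_mul_negPart (A : H →L[ℂ] H))
  · exact fun x => congrArg (fun T : H →L[ℂ] H => T x) (CFC.negPart_mul_posPart (A : H →L[ℂ] H))
  · exact fun C hC => commute_posPart hC
  · exact fun C hC => commute_negPart hC
  · exact fun x hx => ev_eq_zero_of_nonneg (CFC.posPart_nonneg (A : H →L[ℂ] H)) hx
  · exact fun x hx => ev_eq_zero_of_nonneg (CFC.negPart_nonneg (A : H →L[ℂ] H)) hx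

lemma two_of_isScal {A : SA H} (h : IsScal A) : Two A := by
  obtain ⟨r, rfl⟩ := h
  exact ⟨0, 0, r, fun x => rfl, by rw [zero_smul, zero_add]⟩

lemma eq_zero_of_sq {F : SA H} (h : ∀ x, ev F (ev F x) = 0) : F = 0 := by
  refine SA.ext fun x => ?_
  rw [ev_zero, ← inner_self_eq_zero (𝕜 := ℂ), ev_symm, h, inner_zero_right]

lemma two_of_minimal {A : SA H} (h : ∀ B, Sub B A → IsScal B ∨ Sub A B) : Two A := by
  by_cases hA : IsScal A
  · exact two_of_isScal hA
  obtain ⟨x, hx⟩ := not_isScal_iff_exists.mp hA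
  have hx0 : x ≠ 0 := by
    rintro rfl
    exact hx ⟨0, by simp [ev_map_zero]⟩
  have hxx : ⟪x, x⟫ ≠ 0 := inner_self_ne_zero.mpr hx0
  obtain ⟨t, ht⟩ : ∃ t : ℝ, ⟪ev A x, x⟫ = (t : ℂ) * ⟪x, x⟫ := by
    have h1 : (starRingEnd ℂ) (⟪ev A x, x⟫ / ⟪x, x⟫) = ⟪ev A x, x⟫ / ⟪x, x⟫ := by
      rw [map_div₀, inner_conj_symm, inner_conj_symm, ev_symm]
    obtain ⟨t, ht⟩ := Complex.conj_eq_iff_real.mp h1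
    exact ⟨t, by rw [← ht, div_mul_cancel₀ _ hxx]⟩
  obtain ⟨F, G, hFG, hFG0, hGF0, hFA, hGA, hF, hG⟩ := exists_pos_neg_parts
    ((1 : ℝ) • A + (-t) • (1 : SA H))
  have hsub := (Sub.refl A).smul_add 1 (-t)
  replace hFA := hFA.trans hsub
  replace hGA := hGA.trans hsub
  have hev : ∀ y, ev A y = (t : ℂ) • y + (ev F y - ev G y) := fun y => by
    rw [← ev_sub, ← hFG, ev_add, ev_smul, ev_smul, ev_one]
    push_cast
    module
  have hq : ⟪ev F x, x⟫ = ⟪ev G x, x⟫ := by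
    rw [hev x, inner_add_left, inner_sub_left, inner_smul_left, Complex.conj_ofReal] at ht
    linear_combination ht
  have hF0 : F ≠ 0 := by
    rintro rfl
    have h1 := hG x (by rw [← hq, ev_zero, inner_zero_left])
    exact hx ⟨t, by rw [hev, h1, ev_zero, sub_zero, add_zero]⟩
  have hG0 : G ≠ 0 := by
    rintro rfl
    have h1 := hF x (by rw [hq, ev_zero, inner_zero_left])
    exact hx ⟨t, by rw [hev, h1, ev_zero, sub_zero, add_zero]⟩
  have hFs : ¬ IsScal F := by
    rintro ⟨r, rfl⟩
    by_cases hr : r = 0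
    · exact hF0 (by rw [hr, zero_smul])
    · refine hG0 (SA.ext fun y => ?_)
      have := hFG0 y
      rw [ev_smul, ev_one, smul_eq_zero] at this
      exact this.resolve_left (by exact_mod_cast hr)
  have hGs : ¬ IsScal G := by
    rintro ⟨r, rfl⟩
    by_cases hr : r = 0
    · exact hG0 (by rw [hr, zero_smul])
    · refine hF0 (SA.ext fun y => ?_)
      have := hGF0 y
      rw [ev_smul, ev_one, smul_eq_zero] at this
      exact this.resolve_left (by exact_mod_cast hr)
  have hAF := (h F hFA).resolve_left hFs
  have hAG := (h G hGA).resolve_left hGs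
  obtain ⟨b, hb⟩ := exists_scalar_on A (LinearMap.range ((F : H →L[ℂ] H) : H →ₗ[ℂ] H)) (by
    rintro _ ⟨y, rfl⟩
    refine (commC_D_iff _ _).mp (hAG _ ((commC_D_iff _ _).mpr ⟨0, ?_⟩))
    simpa [ev] using hGF0 y)
  have hFF : ∀ y, ev F (ev F y) = ((b - t : ℝ) : ℂ) • ev F y := fun y => by
    have h1 := hb (ev F y) ⟨y, rfl⟩
    rw [hev, hGF0, sub_zero] at h1
    push_cast
    linear_combination (norm := module) h1
  have hbt : ((b - t : ℝ) : ℂ) ≠ 0 := by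
    intro h0
    exact hF0 (eq_zero_of_sq fun y => by rw [hFF, h0, zero_smul])
  have hbt' : (b - t) ≠ 0 := by exact_mod_cast hbt
  set P : SA H := (b - t)⁻¹ • F with hP
  have hPP : ∀ y, ev P (ev P y) = ev P y := fun y => by
    rw [hP, ev_smul, ev_smul, ev_map_smul, hFF, Complex.ofReal_inv, inv_smul_smul₀ hbt]
  have hAP : Sub A P := hAF.trans (by
    have := sub_smul_add F (inv_ne_zero hbt') 0
    rwa [zero_smul, add_zero] at this)
  obtain ⟨a, c, hac⟩ := hAP.eq_of_proj hPP
  exact ⟨P, a, c, hPP, hac⟩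

/-- Operators `a P + b` are those with a minimal non-trivial bicommutant. -/
lemma two_iff {A : SA H} : Two A ↔ ∀ B, Sub B A → IsScal B ∨ Sub A B := by
  refine ⟨?_, two_of_minimal⟩
  rintro ⟨P, a, b, hP, rfl⟩ B hB
  obtain ⟨c, d, rfl⟩ := (hB.trans ((Sub.refl P).smul_add a b)).eq_of_proj hP
  by_cases hc : c = 0
  · exact Or.inl ⟨d, by rw [hc, zero_smul, zero_add]⟩
  · exact Or.inr (((Sub.refl P).smul_add a b).trans (sub_smul_add P hc d))

/-- Operators of the form `a P + b` with `a ≠ 0` and `P` a projection of rank one. -/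
def RankOneLike (A : SA H) : Prop :=
  ∃ (x : H) (a b : ℝ), ‖x‖ = 1 ∧ a ≠ 0 ∧ A = a • D x + b • (1 : SA H)

/-- A property of `A`, formulated in terms of addition and commutativity only, which characterizes
rank-one projections up to affine transformations. -/
def Splits (A : SA H) : Prop :=
  ¬ IsScal A ∧ Two A ∧
    ∀ B, Two B → CommC A B → ∃ A', Sub A' A ∧ Sub A A' ∧ Two (A' + B)

omit [CompleteSpace H] in
lemma inner_self_unit {x : H} (hx : ‖x‖ = 1) : ⟪x, x⟫ = 1 := by
  rw [inner_self_eq_norm_sq_to_K, hx]; simp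

omit [InnerProductSpace ℂ H] [CompleteSpace H] in
lemma ne_zero_of_unit {x : H} (hx : ‖x‖ = 1) : x ≠ 0 := by
  rintro rfl
  simp at hx

lemma D_idem {x : H} (hx : ‖x‖ = 1) (z : H) : ev (D x) (ev (D x) z) = ev (D x) z := by
  rw [ev_D, ev_D, inner_smul_right, inner_self_unit hx, mul_one]

lemma Two.quadratic {T : SA H} (h : Two T) : ∃ u v : ℂ, ∀ (x : H) (t : ℝ), x ≠ 0 →
    ev T x = (t : ℂ) • x → (t : ℂ) = u ∨ (t : ℂ) = v := by
  obtain ⟨P, a, b, hP, rfl⟩ := h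
  refine ⟨b, a + b, fun x t hx ht => ?_⟩
  rw [ev_add, ev_smul, ev_smul, ev_one] at ht
  have h1 : (a : ℂ) • ev P x = ((t : ℂ) - b) • x := by
    linear_combination (norm := module) ht
  have h2 : (a : ℂ) • ev P x = ((t : ℂ) - b) • ev P x := by
    have := congrArg (ev P) h1
    rwa [ev_map_smul, ev_map_smul, hP] at this
  have h3 : (((t : ℂ) - b) * ((t : ℂ) - b - a)) • x = 0 := by
    have : ((t : ℂ) - b) • (a : ℂ) • ev P x = (a : ℂ) • (a : ℂ) • ev P x := by
      rw [smul_comm, ← h2]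
    rw [h1] at this
    linear_combination (norm := module) this
  rcases mul_eq_zero.mp ((smul_eq_zero.mp h3).resolve_right hx) with h | h
  · exact Or.inl (sub_eq_zero.mp h)
  · right
    linear_combination h

lemma eq_D_of_range {P : SA H} (hP : ∀ x, ev P (ev P x) = ev P x) {x : H} (hx : ‖x‖ = 1)
    (hPx : ev P x = x) (h : ∀ z, ev P z = z → ⟪x, z⟫ = 0 → z = 0) : P = D x := by
  refine SA.ext fun y => ?_
  rw [ev_D]
  have := h (ev P y - ⟪x, y⟫ • x) (by rw [ev_map_sub, hP, ev_map_smul, hPx]) (by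
    rw [inner_sub_right, inner_smul_right, inner_self_unit hx, ← ev_symm, hPx, mul_one, sub_self])
  exact sub_eq_zero.mp this

omit [CompleteSpace H] in
lemma exists_unit_smul {x : H} (hx : x ≠ 0) : ∃ c : ℂ, ‖c • x‖ = 1 ∧ c ≠ 0 := by
  refine ⟨((‖x‖⁻¹ : ℝ) : ℂ), ?_, ?_⟩
  · rw [norm_smul, Complex.norm_real, norm_inv, norm_norm, inv_mul_cancel₀ (norm_ne_zero_iff.mpr hx)]
  · exact_mod_cast inv_ne_zero (norm_ne_zero_iff.mpr hx)

lemma exists_pair {P : SA H} (hP : ∀ x, ev P (ev P x) = ev P x) (h0 : P ≠ 0)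
    (h1 : ∀ x : H, ‖x‖ = 1 → P ≠ D x) :
    ∃ x z : H, ‖x‖ = 1 ∧ ev P x = x ∧ z ≠ 0 ∧ ev P z = z ∧ ⟪x, z⟫ = 0 := by
  obtain ⟨w, hw⟩ : ∃ w, ev P w ≠ 0 := by
    by_contra! h
    exact h0 (SA.ext h)
  obtain ⟨c, hc, -⟩ := exists_unit_smul hw
  have hPc : ev P (c • ev P w) = c • ev P w := by rw [ev_map_smul, hP]
  by_contra! h
  refine h1 _ hc (eq_D_of_range hP hc hPc fun z hz hxz => ?_)
  by_contra hz0
  exact h _ z hc hPc hz0 hz hxz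

lemma inner_eq_zero_of_eigen {P : SA H} {x y : H} (hx : ev P x = x) (hy : ev P y = 0) :
    ⟪x, y⟫ = 0 := by
  rw [← hx, ev_symm, hy, inner_zero_right]

lemma two_add_proj_false {P : SA H} {x x' y y' : H}
    (hx : ‖x‖ = 1) (hx' : x' ≠ 0) (hy : ‖y‖ = 1) (hy' : y' ≠ 0)
    (hPx : ev P x = x) (hPx' : ev P x' = x') (hPy : ev P y = 0) (hPy' : ev P y' = 0)
    (hxx' : ⟪x, x'⟫ = 0) (hyy' : ⟪y, y'⟫ = 0) {c d : ℝ} (hc : c ≠ 0) :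
    ¬ Two (c • P + d • (1 : SA H) + (D x + D y)) := by
  intro h
  have hxy : ⟪x, y⟫ = 0 := inner_eq_zero_of_eigen hPx hPy
  have hxy' : ⟪x, y'⟫ = 0 := inner_eq_zero_of_eigen hPx hPy'
  have hyx : ⟪y, x⟫ = 0 := inner_eq_zero_symm.mp hxy
  have hyx' : ⟪y, x'⟫ = 0 := inner_eq_zero_symm.mp (inner_eq_zero_of_eigen hPx' hPy)
  obtain ⟨u, v, huv⟩ := h.quadratic
  have e1 := huv x (c + d + 1) (ne_zero_of_unit hx) (by
    simp only [ev_add, ev_smul, ev_D, ev_one, hPx, inner_self_unit hx, hyx]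
    push_cast
    module)
  have e2 := huv x' (c + d) hx' (by
    simp only [ev_add, ev_smul, ev_D, ev_one, hPx', hxx', hyx']
    push_cast
    module)
  have e3 := huv y (d + 1) (ne_zero_of_unit hy) (by
    simp only [ev_add, ev_smul, ev_D, ev_one, hPy, hxy, inner_self_unit hy]
    push_cast
    module)
  have e4 := huv y' d hy' (by
    simp only [ev_add, ev_smul, ev_D, ev_one, hPy', hxy', hyy']
    module)
  clear huv hxy hxy' hyx hyx' hPx hPx' hPy hPy' hxx' hyy'
  have hc' : (c : ℂ) ≠ 0 := by exact_mod_cast hc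
  push_cast at e1 e2 e3 e4
  rcases e2 with e2 | e2 <;> rcases e4 with e4 | e4
  · exact hc' (by linear_combination e2 - e4)
  · rcases e3 with e3 | e3
    · rcases e1 with e1 | e1
      · exact one_ne_zero (α := ℂ) (by linear_combination e1 - e2)
      · have : (c : ℂ) + 1 = 0 := by linear_combination e1 - e4
        exact two_ne_zero (α := ℂ) (by linear_combination this + e3 - e2)
    · exact one_ne_zero (α := ℂ) (by linear_combination e3 - e4)
  · rcases e3 with e3 | e3
    · exact one_ne_zero (α := ℂ) (by linear_combination e3 - e4)
    · rcases e1 with e1 | e1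
      · have : (c : ℂ) + 1 = 0 := by linear_combination e1 - e4
        exact two_ne_zero (α := ℂ) (by linear_combination this + e3 - e2)
      · exact one_ne_zero (α := ℂ) (by linear_combination e1 - e2)
  · exact hc' (by linear_combination e2 - e4)

lemma two_D_add_D {x y : H} (hx : ‖x‖ = 1) (hy : ‖y‖ = 1) (hxy : ⟪x, y⟫ = 0) :
    Two (D x + D y) := by
  have hyx : ⟪y, x⟫ = 0 := inner_eq_zero_symm.mp hxy
  refine ⟨D x + D y, 1, 0, fun z => ?_, by rw [one_smul, zero_smul, add_zero]⟩
  simp only [ev_add, ev_D, inner_add_right, inner_smul_right, inner_self_unit hx,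
    inner_self_unit hy, hxy, hyx, mul_one, mul_zero, add_zero, zero_add]

lemma Splits.rankOneLike {A : SA H} (h : Splits A) : RankOneLike A := by
  obtain ⟨hA, ⟨P, a, b, hP, rfl⟩, h⟩ := h
  have ha : a ≠ 0 := by
    rintro rfl
    exact hA ⟨b, by rw [zero_smul, zero_add]⟩
  by_cases h1 : ∃ x : H, ‖x‖ = 1 ∧ P = D x
  · obtain ⟨x, hx, rfl⟩ := h1
    exact ⟨x, a, b, hx, ha, rfl⟩
  by_cases h2 : ∃ x : H, ‖x‖ = 1 ∧ 1 - P = D x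
  · obtain ⟨x, hx, hPx⟩ := h2
    refine ⟨x, -a, a + b, hx, neg_ne_zero.mpr ha, ?_⟩
    rw [← hPx]
    refine SA.ext fun z => ?_
    simp only [ev_add, ev_smul, ev_sub, ev_one]
    push_cast
    module
  push Not at h1 h2
  exfalso
  have hP' : ∀ x, ev (1 - P) (ev (1 - P) x) = ev (1 - P) x := fun x => by
    simp only [ev_sub, ev_one, ev_map_sub, hP, sub_self, sub_zero]
  have hP0 : P ≠ 0 := by
    rintro rfl
    exact hA ⟨b, by rw [smul_zero, zero_add]⟩
  have hP1 : 1 - P ≠ 0 := by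
    intro h0
    rw [sub_eq_zero] at h0
    exact hA ⟨a + b, by rw [← h0, add_smul]⟩
  obtain ⟨x, x', hx, hPx, hx', hPx', hxx'⟩ := exists_pair hP hP0 h1
  obtain ⟨y, y', hy, hPy, hy', hPy', hyy'⟩ := exists_pair hP' hP1 h2
  replace hPy : ev P y = 0 := by
    rw [ev_sub, ev_one] at hPy
    exact sub_eq_self.mp hPy
  replace hPy' : ev P y' = 0 := by
    rw [ev_sub, ev_one] at hPy'
    exact sub_eq_self.mp hPy'
  have hPQ : CommC P (D x + D y) := by
    refine commC_iff.mpr fun z => ?_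
    simp only [ev_add, ev_D, ev_map_add, ev_map_smul, hPx, hPy, smul_zero, add_zero]
    rw [← ev_symm, hPx, ← ev_symm, hPy, inner_zero_left, zero_smul, add_zero]
  obtain ⟨A', hA'1, hA'2, hA'3⟩ := h (D x + D y)
    (two_D_add_D hx hy (inner_eq_zero_of_eigen hPx hPy)) (((Sub.refl P).smul_add a b) _ hPQ)
  obtain ⟨c, d, rfl⟩ := (hA'1.trans ((Sub.refl P).smul_add a b)).eq_of_proj hP
  have hc : c ≠ 0 := by
    rintro rfl
    exact hA (IsScal.of_sub ⟨d, by rw [zero_smul, zero_add]⟩ hA'2)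
  exact two_add_proj_false hx hx' hy hy' hPx hPx' hPy hPy' hxx' hyy' hc hA'3

lemma not_isScal_of_rankOneLike {A : SA H} (hdim : ∀ x : H, ∃ z : H, ‖z‖ = 1 ∧ ⟪x, z⟫ = 0)
    (h : RankOneLike A) : ¬ IsScal A := by
  obtain ⟨x, a, b, hx, ha, rfl⟩ := h
  rintro ⟨r, hr⟩
  obtain ⟨z, hz, hxz⟩ := hdim x
  have h1 : ((b : ℂ) - r) • z = 0 := by
    have := congrArg (fun T => ev T z) hr
    simp only [ev_add, ev_smul, ev_D, ev_one, hxz] at this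
    linear_combination (norm := module) this
  have h2 : ((a : ℂ) + b - r) • x = 0 := by
    have := congrArg (fun T => ev T x) hr
    simp only [ev_add, ev_smul, ev_D, ev_one, inner_self_unit hx] at this
    linear_combination (norm := module) this
  have h1' := (smul_eq_zero.mp h1).resolve_right (ne_zero_of_unit hz)
  have h2' := (smul_eq_zero.mp h2).resolve_right (ne_zero_of_unit hx)
  apply ha
  have : (a : ℂ) = 0 := by linear_combination h2' - h1'
  exact_mod_cast this

lemma RankOneLike.splits {A : SA H} (hdim : ∀ x : H, ∃ z : H, ‖z‖ = 1 ∧ ⟪x, z⟫ = 0)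
    (h : RankOneLike A) : Splits A := by
  have hns := not_isScal_of_rankOneLike hdim h
  obtain ⟨x, a, b, hx, ha, rfl⟩ := h
  refine ⟨hns, ⟨D x, a, b, D_idem hx, rfl⟩, ?_⟩
  rintro _ ⟨Q, c, d, hQ, rfl⟩ hAB
  by_cases hc : c = 0
  · subst hc
    refine ⟨_, Sub.refl _, Sub.refl _, D x, a, b + d, D_idem hx, ?_⟩
    refine SA.ext fun z => ?_
    simp only [ev_add, ev_smul, ev_one]
    push_cast
    module
  have hcomm : CommC Q (D x) := sub_smul_add Q hc d _ (sub_smul_add (D x) ha b _ hAB).symm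
  obtain ⟨r, hr⟩ := (commC_D_iff _ _).mp hcomm
  have hr2 : (r : ℂ) * r = r := by
    have h1 := hQ x
    rw [hr, ev_map_smul, hr, smul_smul] at h1
    exact smul_left_injective ℂ (ne_zero_of_unit hx) h1
  have hinner : ∀ z, ⟪x, ev Q z⟫ = r * ⟪x, z⟫ := fun z => by
    rw [← ev_symm, hr, inner_smul_left, Complex.conj_ofReal]
  have hequiv : ∀ s : ℝ, s ≠ 0 → Sub (s • D x) (a • D x + b • (1 : SA H)) ∧
      Sub (a • D x + b • (1 : SA H)) (s • D x) := fun s hs => by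
    have h1 := sub_smul_add (D x) hs 0
    have h2 := (Sub.refl (D x)).smul_add s 0
    rw [zero_smul, add_zero] at h1 h2
    exact ⟨h2.trans (sub_smul_add (D x) ha b), ((Sub.refl (D x)).smul_add a b).trans h1⟩
  have hr01 : (r : ℂ) = 0 ∨ (r : ℂ) = 1 := by
    rcases mul_eq_zero.mp (show (r : ℂ) * (r - 1) = 0 by linear_combination hr2) with h | h
    · exact Or.inl h
    · exact Or.inr (sub_eq_zero.mp h)
  rcases hr01 with h0 | h1
  · refine ⟨c • D x, (hequiv c hc).1, (hequiv c hc).2, D x + Q, c, d, fun z => ?_,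
      by rw [smul_add, add_assoc]⟩
    simp only [ev_add, ev_D, ev_map_add, ev_map_smul, hr, h0, hQ, hinner,
      inner_self_unit hx]
    module
  · refine ⟨(-c) • D x, (hequiv _ (neg_ne_zero.mpr hc)).1, (hequiv _ (neg_ne_zero.mpr hc)).2,
      Q - D x, c, d, fun z => ?_, ?_⟩
    · simp only [ev_sub, ev_D, ev_map_sub, ev_map_smul, hr, h1, hQ, hinner,
        inner_self_unit hx]
      module
    · refine SA.ext fun z => ?_
      simp only [ev_add, ev_smul, ev_one, ev_sub]
      push_cast
      module

/-- Equality of self-adjoint operators modulo real scalars. -/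
def Eqv (A B : SA H) : Prop := ∃ r : ℝ, A = B + r • (1 : SA H)

lemma Eqv.refl (A : SA H) : Eqv A A := ⟨0, by rw [zero_smul, add_zero]⟩

lemma eqv_iff {A B : SA H} : Eqv A B ↔ ∃ r : ℝ, ∀ x, ev A x = ev B x + (r : ℂ) • x := by
  refine exists_congr fun r => ⟨fun h x => ?_, fun h => SA.ext fun x => ?_⟩
  · rw [h, ev_add, ev_smul, ev_one]
  · rw [h, ev_add, ev_smul, ev_one]

lemma Eqv.symm {A B : SA H} (h : Eqv A B) : Eqv B A := by
  obtain ⟨r, hr⟩ := eqv_iff.mp h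
  exact eqv_iff.mpr ⟨-r, fun x => by rw [hr]; push_cast; module⟩

lemma Eqv.trans {A B C : SA H} (h : Eqv A B) (h' : Eqv B C) : Eqv A C := by
  obtain ⟨r, hr⟩ := eqv_iff.mp h
  obtain ⟨s, hs⟩ := eqv_iff.mp h'
  exact eqv_iff.mpr ⟨r + s, fun x => by rw [hr, hs]; push_cast; module⟩

lemma Eqv.add {A B C E : SA H} (h : Eqv A B) (h' : Eqv C E) : Eqv (A + C) (B + E) := by
  obtain ⟨r, hr⟩ := eqv_iff.mp h
  obtain ⟨s, hs⟩ := eqv_iff.mp h'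
  exact eqv_iff.mpr ⟨r + s, fun x => by rw [ev_add, ev_add, hr, hs]; push_cast; module⟩

lemma Eqv.smul {A B : SA H} (h : Eqv A B) (t : ℝ) : Eqv (t • A) (t • B) := by
  obtain ⟨r, hr⟩ := eqv_iff.mp h
  exact eqv_iff.mpr ⟨t * r, fun x => by rw [ev_smul, ev_smul, hr]; push_cast; module⟩

lemma Eqv.sub {A B C E : SA H} (h : Eqv A B) (h' : Eqv C E) : Eqv (A - C) (B - E) := by
  obtain ⟨r, hr⟩ := eqv_iff.mp h
  obtain ⟨s, hs⟩ := eqv_iff.mp h'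
  exact eqv_iff.mpr ⟨r - s, fun x => by rw [ev_sub, ev_sub, hr, hs]; push_cast; module⟩

lemma Eqv.eq {A B : SA H} (h : Eqv A B) {z : H} (hz : z ≠ 0) (hAB : ev A z = ev B z) : A = B := by
  obtain ⟨r, hr⟩ := eqv_iff.mp h
  have h1 : (r : ℂ) • z = 0 := by
    have := hr z
    rwa [hAB, left_eq_add] at this
  refine SA.ext fun x => ?_
  rw [hr x, (smul_eq_zero.mp h1).resolve_right hz, zero_smul, add_zero]

lemma Eqv.commC {A B C : SA H} (h : Eqv A B) (hB : CommC B C) : CommC A C := by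
  obtain ⟨r, hr⟩ := eqv_iff.mp h
  refine commC_iff.mpr fun x => ?_
  rw [hr, hr, ev_map_add, ev_map_smul, commC_iff.mp hB]

/-- Any two vectors are orthogonal to a common unit vector. -/
def Big (H : Type*) [NormedAddCommGroup H] [InnerProductSpace ℂ H] : Prop :=
  ∀ x y : H, ∃ z : H, ‖z‖ = 1 ∧ ⟪x, z⟫ = 0 ∧ ⟪y, z⟫ = 0

omit [CompleteSpace H] in
lemma big_of_rank (hdim : 3 ≤ Module.rank ℂ H) : Big H := by
  intro x y
  set V : Submodule ℂ H := Submodule.span ℂ {x, y}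
  have hfin : FiniteDimensional ℂ V := FiniteDimensional.span_of_finite ℂ (Set.toFinite _)
  have hxV : x ∈ V := Submodule.subset_span (by simp)
  have hyV : y ∈ V := Submodule.subset_span (by simp)
  have hV : V ≠ ⊤ := by
    intro h
    have h1 : Module.rank ℂ V ≤ 2 := by
      refine (rank_span_le _).trans ?_
      refine Cardinal.mk_insert_le.trans ?_
      rw [Cardinal.mk_singleton, one_add_one_eq_two]
    rw [h, rank_top] at h1
    have := hdim.trans h1
    norm_num at this
  have hV' : Vᗮ ≠ ⊥ := fun h => hV (Submodule.orthogonal_eq_bot_iff.mp h)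
  obtain ⟨w, hw, hw0⟩ := Submodule.exists_mem_ne_zero_of_ne_bot hV'
  obtain ⟨c, hc, -⟩ := exists_unit_smul hw0
  refine ⟨c • w, hc, ?_, ?_⟩
  · exact Submodule.inner_right_of_mem_orthogonal hxV
      (Vᗮ.smul_mem c hw)
  · exact Submodule.inner_right_of_mem_orthogonal hyV
      (Vᗮ.smul_mem c hw)

omit [CompleteSpace H] in
lemma Big.single (h : Big H) (x : H) : ∃ z : H, ‖z‖ = 1 ∧ ⟪x, z⟫ = 0 := by
  obtain ⟨z, hz, hxz, -⟩ := h x x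
  exact ⟨z, hz, hxz⟩

/-- Additive surjective maps preserving commutativity in both directions. -/
structure IsCommPres (φ : SA H → SA H) : Prop where
  add : ∀ A B, φ (A + B) = φ A + φ B
  surj : Function.Surjective φ
  comm : ∀ A B, CommC A B ↔ CommC (φ A) (φ B)

namespace IsCommPres

variable {φ : SA H → SA H}

lemma sub (hφ : IsCommPres φ) (A B : SA H) : φ (A - B) = φ A - φ B :=
  map_sub (AddMonoidHom.mk' φ hφ.add) A B

lemma sub_iff (hφ : IsCommPres φ) {A B : SA H} : Sub (φ B) (φ A) ↔ Sub B A := by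
  constructor
  · exact fun h C hC => (hφ.comm _ _).mpr (h _ ((hφ.comm _ _).mp hC))
  · intro h C hC
    obtain ⟨C, rfl⟩ := hφ.surj C
    exact (hφ.comm _ _).mp (h _ ((hφ.comm _ _).mpr hC))

lemma isScal_iff (hφ : IsCommPres φ) {A : SA H} : IsScal (φ A) ↔ IsScal A := by
  rw [CommPres.isScal_iff, CommPres.isScal_iff, hφ.surj.forall]
  exact forall_congr' fun B => (hφ.comm _ _).symm

lemma two_iff (hφ : IsCommPres φ) {A : SA H} : Two (φ A) ↔ Two A := by
  rw [CommPres.two_iff, CommPres.two_iff, hφ.surj.forall]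
  simp only [hφ.sub_iff, hφ.isScal_iff]

lemma splits_iff (hφ : IsCommPres φ) {A : SA H} : Splits (φ A) ↔ Splits A := by
  unfold Splits
  rw [hφ.surj.forall, hφ.isScal_iff, hφ.two_iff]
  refine and_congr_right fun _ => and_congr_right fun _ => forall_congr' fun B => ?_
  rw [hφ.surj.exists, hφ.two_iff, ← hφ.comm]
  simp only [← hφ.add, hφ.sub_iff, hφ.two_iff]

lemma rankOneLike_iff (hφ : IsCommPres φ) (hH : Big H) {A : SA H} :
    RankOneLike (φ A) ↔ RankOneLike A :=
  ⟨fun h => (hφ.splits_iff.mp (h.splits hH.single)).rankOneLike,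
    fun h => (hφ.splits_iff.mpr (h.splits hH.single)).rankOneLike⟩

lemma eqv (hφ : IsCommPres φ) {A B : SA H} (h : Eqv A B) : Eqv (φ A) (φ B) := by
  obtain ⟨r, rfl⟩ := h
  obtain ⟨s, hs⟩ := hφ.isScal_iff.mpr ⟨r, rfl⟩
  exact ⟨s, by rw [hφ.add, hs]⟩

end IsCommPres

/-- The map `φ` sends real multiples of `D x` to multiples of `D v`, up to scalars. -/
structure Rep (φ : SA H → SA H) (q : ℝ → ℝ) (x v : H) : Prop where
  left : ‖x‖ = 1
  right : ‖v‖ = 1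
  eqv : ∀ t : ℝ, Eqv (φ (t • D x)) (q t • D v)

lemma ev_D_self {x : H} (hx : ‖x‖ = 1) : ev (D x) x = x := by
  rw [ev_D, inner_self_unit hx, one_smul]

lemma ev_D_of_orthogonal {x z : H} (h : ⟪x, z⟫ = 0) : ev (D x) z = 0 := by
  rw [ev_D, h, zero_smul]

lemma smul_D_injective {x : H} (hx : ‖x‖ = 1) {a b : ℝ} (h : a • D x = b • D x) : a = b := by
  have h1 := congrArg (fun T => ev T x) h
  simp only [ev_smul, ev_D_self hx] at h1
  have := smul_left_injective ℂ (ne_zero_of_unit hx) h1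
  exact_mod_cast this

lemma IsCommPres.exists_rep {φ : SA H → SA H} (hφ : IsCommPres φ) (hH : Big H) {x : H}
    (hx : ‖x‖ = 1) : ∃ v q, Rep φ q x v := by
  obtain ⟨v, a, b, hv, ha, hab⟩ := (hφ.rankOneLike_iff hH).mpr
    ⟨x, 1, 0, hx, one_ne_zero, show D x = _ by rw [one_smul, zero_smul, add_zero]⟩
  have h : ∀ t : ℝ, ∃ c : ℝ, Eqv (φ (t • D x)) (c • D v) := by
    intro t
    have h1 : Sub (t • D x) (D x) := by
      simpa only [zero_smul, add_zero] using (Sub.refl (D x)).smul_add t 0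
    have h2 := hφ.sub_iff.mpr h1
    rw [hab] at h2
    obtain ⟨c, d, hcd⟩ := (h2.trans ((Sub.refl (D v)).smul_add a b)).eq_of_proj (D_idem hv)
    exact ⟨c, d, hcd⟩
  choose q hq using h
  exact ⟨v, q, hx, hv, hq⟩

namespace Rep

variable {φ : SA H → SA H} {q q' : ℝ → ℝ} {x y v w : H}

lemma map_add (h : Rep φ q x v) (hφ : IsCommPres φ) (hH : Big H) (s t : ℝ) :
    q (s + t) = q s + q t := by
  obtain ⟨z, hz, hvz⟩ := hH.single v
  apply smul_D_injective h.right
  rw [add_smul]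
  refine Eqv.eq (z := z) ?_ (ne_zero_of_unit hz) ?_
  · refine (h.eqv (s + t)).symm.trans ?_
    rw [add_smul, hφ.add]
    exact (h.eqv s).add (h.eqv t)
  · simp only [ev_add, ev_smul, ev_D_of_orthogonal hvz, smul_zero, add_zero]

lemma ne_zero (h : Rep φ q x v) (hφ : IsCommPres φ) (hH : Big H) {t : ℝ} (ht : t ≠ 0) :
    q t ≠ 0 := by
  intro h0
  obtain ⟨r, hr⟩ := h.eqv t
  rw [h0, zero_smul, zero_add] at hr
  refine not_isScal_of_rankOneLike hH.single ⟨x, t, 0, h.left, ht, ?_⟩ (hφ.isScal_iff.mp ⟨r, hr⟩)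
  rw [zero_smul, add_zero]

lemma commC_iff (h : Rep φ q x v) (hφ : IsCommPres φ) (hH : Big H) (C : SA H) :
    CommC C (D x) ↔ CommC (φ C) (D v) := by
  rw [hφ.comm]
  have h1 := h.eqv 1
  have hq := h.ne_zero hφ hH one_ne_zero
  rw [one_smul] at h1
  constructor
  · intro hC
    have h2 := h1.symm.commC (CommC.symm' hC)
    have h3 := sub_smul_add (D v) hq 0
    rw [zero_smul, add_zero] at h3
    exact CommC.symm' (h3 _ h2)
  · intro hC
    have h3 := (Sub.refl (D v)).smul_add (q 1) 0
    rw [zero_smul, add_zero] at h3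
    exact CommC.symm' (h1.commC (h3 _ (CommC.symm' hC)))

lemma commC_iff' (h : Rep φ q x v) (h' : Rep φ q' y w) (hφ : IsCommPres φ) (hH : Big H) :
    CommC (D x) (D y) ↔ CommC (D v) (D w) := by
  have h1 := h'.eqv 1
  have hq := h'.ne_zero hφ hH one_ne_zero
  rw [one_smul] at h1
  refine Iff.trans ⟨CommC.symm', CommC.symm'⟩ ((h.commC_iff hφ hH (D y)).trans ?_)
  constructor
  · intro hC
    have h2 := h1.symm.commC hC
    have h3 := sub_smul_add (D w) hq 0
    rw [zero_smul, add_zero] at h3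
    exact CommC.symm' (h3 _ h2)
  · intro hC
    have h3 := (Sub.refl (D w)).smul_add (q' 1) 0
    rw [zero_smul, add_zero] at h3
    exact h1.commC (h3 _ (CommC.symm' hC))

lemma commC_D_of_orthogonal {x y : H} (h : ⟪x, y⟫ = 0) : CommC (D x) (D y) :=
  (commC_D_iff _ _).mpr ⟨0, by rw [ev_D, h, zero_smul, Complex.ofReal_zero, zero_smul]⟩

lemma orthogonal (h : Rep φ q x v) (h' : Rep φ q' y w) (hφ : IsCommPres φ) (hH : Big H)
    (hxy : ⟪x, y⟫ = 0) : ⟪v, w⟫ = 0 := by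
  by_contra hne
  obtain ⟨r, hr⟩ := (commC_D_iff _ _).mp
    ((h.commC_iff' h' hφ hH).mp (commC_D_of_orthogonal hxy))
  rw [ev_D] at hr
  have hv : v = (⟪v, w⟫⁻¹ * r) • w := by
    rw [mul_smul, ← hr, inv_smul_smul₀ hne]
  have hsub : Sub (D x) (D y) := by
    intro C hC
    obtain ⟨s, hs⟩ := (commC_D_iff _ _).mp ((h'.commC_iff hφ hH C).mp (CommC.symm' hC))
    refine CommC.symm' ((h.commC_iff hφ hH C).mpr ((commC_D_iff _ _).mpr ⟨s, ?_⟩))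
    rw [hv, ev_map_smul, hs, smul_comm]
  obtain ⟨a, b, hab⟩ := hsub.eq_of_proj (D_idem h'.left)
  obtain ⟨z, hz, hxz, hyz⟩ := hH x y
  have hb : (b : ℂ) • z = 0 := by
    have := congrArg (fun T => ev T z) hab
    simpa only [ev_add, ev_smul, ev_one, ev_D_of_orthogonal hxz, ev_D_of_orthogonal hyz, smul_zero,
      zero_add, eq_comm] using this
  have := congrArg (fun T => ev T x) hab
  simp only [ev_add, ev_smul, ev_one, ev_D_self h.left,
    ev_D_of_orthogonal (inner_eq_zero_symm.mp hxy), (smul_eq_zero.mp hb).resolve_right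
    (ne_zero_of_unit hz), smul_zero, zero_smul, add_zero] at this
  exact ne_zero_of_unit h.left this

end Rep

lemma D_rotate (x y : H) {α β : ℝ} (h : α ^ 2 + β ^ 2 = 1) :
    D ((α : ℂ) • x + (β : ℂ) • y) + D ((β : ℂ) • x - (α : ℂ) • y) = D x + D y := by
  have hc : (α : ℂ) ^ 2 + (β : ℂ) ^ 2 = 1 := by exact_mod_cast h
  refine SA.ext fun z => ?_
  simp only [ev_add, ev_D, inner_add_left, inner_sub_left, inner_smul_left, Complex.conj_ofReal]
  linear_combination (norm := module) hc • (⟪x, z⟫ • x + ⟪y, z⟫ • y)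

omit [CompleteSpace H] in
lemma norm_eq_one_of_inner {x : H} (h : ⟪x, x⟫ = 1) : ‖x‖ = 1 := by
  rw [@norm_eq_sqrt_re_inner ℂ, h]
  simp

omit [CompleteSpace H] in
lemma norm_rotate {x y : H} (hx : ‖x‖ = 1) (hy : ‖y‖ = 1) (hxy : ⟪x, y⟫ = 0) {α β : ℝ}
    (h : α ^ 2 + β ^ 2 = 1) : ‖(α : ℂ) • x + (β : ℂ) • y‖ = 1 := by
  have hc : (α : ℂ) ^ 2 + (β : ℂ) ^ 2 = 1 := by exact_mod_cast h
  apply norm_eq_one_of_inner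
  simp only [inner_add_left, inner_add_right, inner_smul_left, inner_smul_right,
    Complex.conj_ofReal, inner_self_unit hx, inner_self_unit hy, hxy, inner_eq_zero_symm.mp hxy]
  linear_combination hc

omit [CompleteSpace H] in
lemma norm_rotate' {x y : H} (hx : ‖x‖ = 1) (hy : ‖y‖ = 1) (hxy : ⟪x, y⟫ = 0) {α β : ℝ}
    (h : α ^ 2 + β ^ 2 = 1) : ‖(β : ℂ) • x - (α : ℂ) • y‖ = 1 := by
  have := norm_rotate hx hy hxy (α := β) (β := -α) (by linarith)
  rwa [Complex.ofReal_neg, neg_smul, ← sub_eq_add_neg] at this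

omit [CompleteSpace H] in
lemma inner_rotate {x y : H} (hx : ‖x‖ = 1) (hy : ‖y‖ = 1) (hxy : ⟪x, y⟫ = 0) (α β : ℝ) :
    ⟪(α : ℂ) • x + (β : ℂ) • y, (β : ℂ) • x - (α : ℂ) • y⟫ = 0 := by
  simp only [inner_add_left, inner_sub_right, inner_smul_left, inner_smul_right,
    Complex.conj_ofReal, inner_self_unit hx, inner_self_unit hy, hxy, inner_eq_zero_symm.mp hxy]
  ring

namespace Rep

variable {φ : SA H → SA H} {x y : H}

lemma sum_eq {q₁ q₂ q₃ q₄ : ℝ → ℝ} {x₁ x₂ x₃ x₄ v₁ v₂ v₃ v₄ z : H} (h₁ : Rep φ q₁ x₁ v₁)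
    (h₂ : Rep φ q₂ x₂ v₂) (h₃ : Rep φ q₃ x₃ v₃) (h₄ : Rep φ q₄ x₄ v₄) (hφ : IsCommPres φ)
    (hH : Big H) (hz : ‖z‖ = 1) (hz₁ : ⟪x₁, z⟫ = 0) (hz₂ : ⟪x₂, z⟫ = 0) (hz₃ : ⟪x₃, z⟫ = 0)
    (hz₄ : ⟪x₄, z⟫ = 0) (h : D x₁ + D x₂ = D x₃ + D x₄) (t : ℝ) :
    q₁ t • D v₁ + q₂ t • D v₂ = q₃ t • D v₃ + q₄ t • D v₄ := by
  obtain ⟨u, q, hu⟩ := hφ.exists_rep hH hz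
  refine Eqv.eq (z := u) ?_ (ne_zero_of_unit hu.right) ?_
  · refine ((h₁.eqv t).add (h₂.eqv t)).symm.trans (Eqv.trans ?_ ((h₃.eqv t).add (h₄.eqv t)))
    rw [← hφ.add, ← hφ.add, ← smul_add, ← smul_add, h]
    exact Eqv.refl _
  · simp only [ev_add, ev_smul, ev_D_of_orthogonal (h₁.orthogonal hu hφ hH hz₁),
      ev_D_of_orthogonal (h₂.orthogonal hu hφ hH hz₂),
      ev_D_of_orthogonal (h₃.orthogonal hu hφ hH hz₃),
      ev_D_of_orthogonal (h₄.orthogonal hu hφ hH hz₄), smul_zero]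

lemma inner_ne_zero {q₁ q₂ : ℝ → ℝ} {v u : H} {α β : ℝ} (hx : Rep φ q₁ x v)
    (hu : Rep φ q₂ ((α : ℂ) • x + (β : ℂ) • y) u) (hφ : IsCommPres φ) (hH : Big H)
    (hy : ‖y‖ = 1) (hxy : ⟪x, y⟫ = 0) (hα : α ≠ 0) (hβ : β ≠ 0) : ⟪u, v⟫ ≠ 0 := by
  intro h
  obtain ⟨r, hr⟩ := (commC_D_iff _ _).mp ((hx.commC_iff' hu hφ hH).mpr
    (commC_D_of_orthogonal (inner_eq_zero_symm.mp h)))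
  rw [ev_D, inner_add_right, inner_smul_right, inner_smul_right, inner_self_unit hx.left, hxy,
    mul_one, mul_zero, add_zero] at hr
  have h1 := congrArg (fun T => ⟪y, T⟫) hr
  simp only [inner_add_right, inner_smul_right, inner_self_unit hy, inner_eq_zero_symm.mp hxy,
    mul_zero, zero_add, mul_one] at h1
  have hβ' : (β : ℂ) ≠ 0 := by exact_mod_cast hβ
  have hα' : (α : ℂ) ≠ 0 := by exact_mod_cast hα
  rw [(mul_eq_zero.mp h1.symm).resolve_right hβ', zero_smul] at hr
  exact ne_zero_of_unit hx.left ((smul_eq_zero.mp hr).resolve_left hα')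

lemma eq_rotate {q₁ q₂ : ℝ → ℝ} {v u : H} {α β : ℝ} (hx : Rep φ q₁ x v)
    (hu : Rep φ q₂ ((α : ℂ) • x + (β : ℂ) • y) u) (hφ : IsCommPres φ) (hH : Big H)
    (hy : ‖y‖ = 1) (hxy : ⟪x, y⟫ = 0) (hα : α ≠ 0) (hβ : β ≠ 0) (h : α ^ 2 + β ^ 2 = 1) :
    q₂ = q₁ := by
  obtain ⟨w, qy, hyw⟩ := hφ.exists_rep hH hy
  obtain ⟨m, qm, hm⟩ := hφ.exists_rep hH (norm_rotate' hx.left hy hxy h)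
  obtain ⟨z, hz, hxz, hyz⟩ := hH x y
  have key := hu.sum_eq hm hx hyw hφ hH hz
    (by rw [inner_add_left, inner_smul_left, inner_smul_left, hxz, hyz, mul_zero, mul_zero,
      add_zero])
    (by rw [inner_sub_left, inner_smul_left, inner_smul_left, hxz, hyz, mul_zero, mul_zero,
      sub_zero]) hxz hyz (D_rotate x y h)
  have hum := hu.orthogonal hm hφ hH (inner_rotate hx.left hy hxy α β)
  have hwv := hyw.orthogonal hx hφ hH (inner_eq_zero_symm.mp hxy)
  have hne := hx.inner_ne_zero hu hφ hH hy hxy hα hβ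
  funext t
  have h1 := congrArg (fun T => ⟪u, ev T v⟫) (key t)
  simp only [ev_add, ev_smul, ev_D, inner_add_right, inner_smul_right, inner_self_unit hx.right,
    inner_self_unit hu.right, hum, hwv, mul_zero, mul_one, add_zero, one_mul, zero_mul] at h1
  exact_mod_cast mul_right_cancel₀ hne h1

lemma unique_of_orthogonal {q₁ q₂ : ℝ → ℝ} {v w : H} (hx : Rep φ q₁ x v) (hy : Rep φ q₂ y w)
    (hφ : IsCommPres φ) (hH : Big H) (hxy : ⟪x, y⟫ = 0) : q₁ = q₂ := by
  have h : ((3 / 5 : ℝ)) ^ 2 + (4 / 5 : ℝ) ^ 2 = 1 := by norm_num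
  obtain ⟨u, q, hu⟩ := hφ.exists_rep hH (norm_rotate hx.left hy.left hxy h)
  rw [← hx.eq_rotate hu hφ hH hy.left hxy (by norm_num) (by norm_num) h]
  rw [add_comm] at hu h
  exact hy.eq_rotate hu hφ hH hx.left (inner_eq_zero_symm.mp hxy) (by norm_num) (by norm_num) h

lemma unique {q₁ q₂ : ℝ → ℝ} {v w : H} (hx : Rep φ q₁ x v) (hy : Rep φ q₂ y w)
    (hφ : IsCommPres φ) (hH : Big H) : q₁ = q₂ := by
  obtain ⟨z, hz, hxz, hyz⟩ := hH x y
  obtain ⟨u, q, hu⟩ := hφ.exists_rep hH hz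
  rw [hx.unique_of_orthogonal hu hφ hH hxz, hy.unique_of_orthogonal hu hφ hH hyz]

end Rep

lemma IsCommPres.exists_common {φ : SA H → SA H} (hφ : IsCommPres φ) (hH : Big H) :
    ∃ a : ℝ → ℝ, (∀ s t, a (s + t) = a s + a t) ∧ a 1 ≠ 0 ∧
      ∀ x : H, ‖x‖ = 1 → ∃ v, Rep φ a x v := by
  obtain ⟨z, hz, -⟩ := hH.single 0
  obtain ⟨u, q, hu⟩ := hφ.exists_rep hH hz
  refine ⟨q, hu.map_add hφ hH, hu.ne_zero hφ hH one_ne_zero, fun x hx => ?_⟩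
  obtain ⟨v, q', hv⟩ := hφ.exists_rep hH hx
  rw [hu.unique hv hφ hH]
  exact ⟨v, hv⟩

/-- The operator `z ↦ ⟪x, z⟫ y + ⟪y, z⟫ x`. -/
def M (x y : H) : SA H := D (x + y) - D x - D y

lemma ev_M (x y z : H) : ev (M x y) z = ⟪x, z⟫ • y + ⟪y, z⟫ • x := by
  simp only [M, ev_sub, ev_D, inner_add_left]
  module

lemma M_eq_sub {x y : H} {γ : ℝ} (h : γ ^ 2 + γ ^ 2 = 1) :
    M x y = D ((γ : ℂ) • x + (γ : ℂ) • y) - D ((γ : ℂ) • x - (γ : ℂ) • y) := by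
  have hc : (γ : ℂ) ^ 2 + (γ : ℂ) ^ 2 = 1 := by exact_mod_cast h
  refine SA.ext fun z => ?_
  simp only [ev_M, ev_sub, ev_D, inner_add_left, inner_sub_left, inner_smul_left,
    Complex.conj_ofReal]
  linear_combination (norm := module) -hc • (⟪x, z⟫ • y + ⟪y, z⟫ • x)

lemma smul_D_rotate (x y : H) {α t : ℝ} (h : α ^ 2 + (t * α) ^ 2 = 1) :
    (1 + t ^ 2) • D ((α : ℂ) • x + ((t * α : ℝ) : ℂ) • y) =
      (1 : ℝ) • D x + t • M x y + (t ^ 2) • D y := by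
  have hc : (α : ℂ) ^ 2 * (1 + (t : ℂ) ^ 2) = 1 := by
    have : α ^ 2 * (1 + t ^ 2) = 1 := by linarith
    exact_mod_cast this
  refine SA.ext fun z => ?_
  simp only [ev_M, ev_add, ev_smul, ev_D, inner_add_left, inner_smul_left, Complex.conj_ofReal]
  push_cast
  linear_combination (norm := module)
    hc • ((⟪x, z⟫ + t * ⟪y, z⟫) • x + ((t : ℂ) * (⟪x, z⟫ + t * ⟪y, z⟫)) • y)

lemma quadratic_of_smul_D {S Y : SA H} {u v w : H} {k a b : ℝ} (hu : ‖u‖ = 1) (hv : ‖v‖ = 1)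
    (hY : ev Y v = 0) (hS : ev S v = w) (hw : ⟪w, w⟫ = 1)
    (h : k • D u = D v + a • S + b • Y) :
    1 + 2 * a * ⟪v, w⟫ + a ^ 2 = k * (1 + a * ⟪v, w⟫) := by
  have h1 := congrArg (fun T => ev T v) h
  simp only [ev_add, ev_smul, ev_D_self hv, hY, hS, smul_zero, add_zero, ev_D] at h1
  have hs : ⟪w, v⟫ = ⟪v, w⟫ := by rw [← hS, ev_symm]
  have h2 := congrArg (fun T => ⟪v, T⟫) h1
  have h3 := congrArg (fun T => ⟪T, T⟫) h1
  simp only [inner_add_left, inner_add_right, inner_smul_left, inner_smul_right,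
    Complex.conj_ofReal, inner_conj_symm, inner_self_unit hu, inner_self_unit hv, hw, hs] at h2 h3
  linear_combination (-1 : ℂ) * h3 + (k : ℂ) * h2

/-- Normalized commutativity preserving maps. -/
structure IsNormal (φ : SA H → SA H) (a : ℝ → ℝ) : Prop extends IsCommPres φ where
  map_add : ∀ s t, a (s + t) = a s + a t
  map_one : a 1 = 1
  exists_rep : ∀ x : H, ‖x‖ = 1 → ∃ v, Rep φ a x v

lemma exists_sq_add_sq (t : ℝ) : ∃ α : ℝ, α ^ 2 + (t * α) ^ 2 = 1 := by
  have h : 0 < 1 + t ^ 2 := by positivity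
  refine ⟨√(1 + t ^ 2)⁻¹, ?_⟩
  rw [mul_pow, Real.sq_sqrt (by positivity)]
  field_simp

lemma eq_id_of_sq {a : ℝ → ℝ} (hadd : ∀ s t, a (s + t) = a s + a t) (h1 : a 1 = 1)
    (hsq : ∀ t, a (t ^ 2) = a t ^ 2) : a = id := by
  have hmul : ∀ s t, a (s * t) = a s * a t := by
    intro s t
    have h2 := hsq (s + t)
    rw [show (s + t) ^ 2 = s ^ 2 + (s * t + s * t) + t ^ 2 by ring, hadd, hadd, hadd, hadd, hsq,
      hsq] at h2
    linarith
  have h0 : a 0 = 0 := by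
    have := hadd 0 0
    rw [add_zero] at this
    linarith
  let f : ℝ →+* ℝ :=
    { toFun := a, map_one' := h1, map_mul' := hmul, map_zero' := h0, map_add' := hadd }
  have : f = RingHom.id ℝ := Subsingleton.elim _ _
  exact congrArg (fun g : ℝ →+* ℝ => (g : ℝ → ℝ)) this

namespace IsNormal

variable {φ : SA H → SA H} {a : ℝ → ℝ} {x y : H}

/-- The image of `M x y` for orthonormal `x` and `y` is a symmetry of the plane spanned by the
images of `x` and `y`. -/
lemma exists_symmetry (hφ : IsNormal φ a) (hH : Big H) {v w : H} (hx : Rep φ a x v)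
    (hy : Rep φ a y w) (hxy : ⟪x, y⟫ = 0) :
    ∃ S : SA H, (∀ z, ev S (ev S z) = ev (D v + D w) z) ∧ (∀ z, ev S (ev (D v + D w) z) = ev S z) ∧
      (∀ z, ⟪v, z⟫ = 0 → ⟪w, z⟫ = 0 → ev S z = 0) ∧ ∀ t : ℝ, Eqv (φ (t • M x y)) (a t • S) := by
  obtain ⟨γ, hγ⟩ := exists_sq_add_sq 1
  rw [one_mul] at hγ
  obtain ⟨p, hp⟩ := hφ.exists_rep _ (norm_rotate hx.left hy.left hxy hγ)
  obtain ⟨m, hm⟩ := hφ.exists_rep _ (norm_rotate' hx.left hy.left hxy hγ)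
  obtain ⟨z, hz, hxz, hyz⟩ := hH x y
  have hpm := hp.orthogonal hm hφ.1 hH (inner_rotate hx.left hy.left hxy γ γ)
  have key := hp.sum_eq hm hx hy hφ.1 hH hz
    (by rw [inner_add_left, inner_smul_left, inner_smul_left, hxz, hyz, mul_zero, add_zero])
    (by rw [inner_sub_left, inner_smul_left, inner_smul_left, hxz, hyz, mul_zero, sub_zero])
    hxz hyz (D_rotate x y hγ) 1
  simp only [hφ.map_one, one_smul] at key
  have hmp := inner_eq_zero_symm.mp hpm
  refine ⟨D p - D m, fun z => ?_, fun z => ?_, fun z hvz hwz => ?_, fun t => ?_⟩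
  · rw [← key]
    simp only [ev_add, ev_sub, ev_D, ev_map_sub, ev_map_smul, inner_self_unit hp.right,
      inner_self_unit hm.right, hpm, hmp]
    module
  · rw [← key]
    simp only [ev_add, ev_sub, ev_D, ev_map_add, ev_map_smul, inner_self_unit hp.right,
      inner_self_unit hm.right, hpm, hmp]
    module
  · have h1 : ev (D p + D m) z = 0 := by
      rw [key, ev_add, ev_D_of_orthogonal hvz, ev_D_of_orthogonal hwz, add_zero]
    rw [ev_add, ev_D, ev_D] at h1
    have h2 := congrArg (fun T => ⟪p, T⟫) h1
    have h3 := congrArg (fun T => ⟪m, T⟫) h1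
    simp only [inner_add_right, inner_smul_right, inner_self_unit hp.right,
      inner_self_unit hm.right, hpm, hmp, mul_one, mul_zero, add_zero, zero_add,
      inner_zero_right] at h2 h3
    rw [ev_sub, ev_D, ev_D, h2, h3, zero_smul, zero_smul, sub_zero]
  · rw [M_eq_sub hγ, smul_sub, hφ.sub, smul_sub]
    exact (hp.eqv t).sub (hm.eqv t)

lemma exists_smul_D (hφ : IsNormal φ a) (hH : Big H) {v w : H} (hx : Rep φ a x v)
    (hy : Rep φ a y w) (hxy : ⟪x, y⟫ = 0) {S : SA H}
    (hS : ∀ z, ⟪v, z⟫ = 0 → ⟪w, z⟫ = 0 → ev S z = 0)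
    (hφS : ∀ t : ℝ, Eqv (φ (t • M x y)) (a t • S)) (t : ℝ) :
    ∃ u, ‖u‖ = 1 ∧ a (1 + t ^ 2) • D u = D v + a t • S + a (t ^ 2) • D w := by
  obtain ⟨α, hα⟩ := exists_sq_add_sq t
  obtain ⟨u, hu⟩ := hφ.exists_rep _ (norm_rotate hx.left hy.left hxy hα)
  obtain ⟨z, hz, hxz, hyz⟩ := hH x y
  obtain ⟨z', hz'⟩ := hφ.exists_rep _ hz
  have hvz := hx.orthogonal hz' hφ.1 hH hxz
  have hwz := hy.orthogonal hz' hφ.1 hH hyz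
  have huz := hu.orthogonal hz' hφ.1 hH
    (by rw [inner_add_left, inner_smul_left, inner_smul_left, hxz, hyz, mul_zero, mul_zero,
      add_zero])
  refine ⟨u, hu.right, Eqv.eq (z := z') ?_ (ne_zero_of_unit hz'.right) ?_⟩
  · refine (hu.eqv (1 + t ^ 2)).symm.trans ?_
    have h1 := hx.eqv 1
    rw [hφ.map_one, one_smul ℝ (D v)] at h1
    rw [smul_D_rotate x y hα, hφ.add, hφ.add]
    exact (h1.add (hφS t)).add (hy.eqv (t ^ 2))
  · simp only [ev_add, ev_smul, ev_D_of_orthogonal hvz, ev_D_of_orthogonal hwz,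
      ev_D_of_orthogonal huz, hS z' hvz hwz, smul_zero, add_zero]

lemma relations (hφ : IsNormal φ a) (hH : Big H) {v w : H} (hx : Rep φ a x v)
    (hy : Rep φ a y w) (hxy : ⟪x, y⟫ = 0) {S : SA H}
    (hSS : ∀ z, ev S (ev S z) = ev (D v + D w) z)
    (hS : ∀ z, ⟪v, z⟫ = 0 → ⟪w, z⟫ = 0 → ev S z = 0)
    (hφS : ∀ t : ℝ, Eqv (φ (t • M x y)) (a t • S)) (t : ℝ) :
    ⟪ev S v, ev S v⟫ = 1 ∧ a (t ^ 2) = a t ^ 2 ∧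
      (2 : ℂ) * a t * ⟪v, ev S v⟫ = a (1 + t ^ 2) * (a t * ⟪v, ev S v⟫) := by
  have hvw := hx.orthogonal hy hφ.1 hH hxy
  have hwv := inner_eq_zero_symm.mp hvw
  have h1 : ⟪ev S v, ev S v⟫ = 1 := by
    rw [ev_symm, hSS, ev_add, ev_D_self hx.right, ev_D_of_orthogonal hwv, add_zero,
      inner_self_unit hx.right]
  have h0 : a 0 = 0 := by
    have := hφ.map_add 0 0
    rw [add_zero] at this
    linarith
  have hneg : a (-t) = -a t := by
    have := hφ.map_add t (-t)
    rw [add_neg_cancel, h0] at this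
    linarith
  obtain ⟨u, hu, hu'⟩ := hφ.exists_smul_D hH hx hy hxy hS hφS t
  obtain ⟨u₂, hu₂, hu₂'⟩ := hφ.exists_smul_D hH hx hy hxy hS hφS (-t)
  have e1 := quadratic_of_smul_D hu hx.right (ev_D_of_orthogonal hwv) rfl h1 hu'
  have e2 := quadratic_of_smul_D hu₂ hx.right (ev_D_of_orthogonal hwv) rfl h1 hu₂'
  rw [neg_sq, hneg] at e2
  push_cast at e2
  refine ⟨h1, ?_, by linear_combination (e1 - e2) / 2⟩
  have e3 : (a t : ℂ) ^ 2 + 1 = a (1 + t ^ 2) := by linear_combination (e1 + e2) / 2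
  have e4 : a t ^ 2 + 1 = a (1 + t ^ 2) := by exact_mod_cast e3
  rw [hφ.map_add, hφ.map_one] at e4
  linarith

lemma eq_id (hφ : IsNormal φ a) (hH : Big H) : a = id := by
  obtain ⟨x, hx, -⟩ := hH.single 0
  obtain ⟨y, hy, hxy⟩ := hH.single x
  obtain ⟨v, hxv⟩ := hφ.exists_rep x hx
  obtain ⟨w, hyw⟩ := hφ.exists_rep y hy
  obtain ⟨S, hSS, -, hS, hφS⟩ := hφ.exists_symmetry hH hxv hyw hxy
  exact eq_id_of_sq hφ.map_add hφ.map_one fun t =>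
    (hφ.relations hH hxv hyw hxy hSS hS hφS t).2.1

lemma exists_M_of_unit (hφ : IsNormal φ id) (hH : Big H) {v : H} (hx : Rep φ id x v)
    (hy : ‖y‖ = 1) (hxy : ⟪x, y⟫ = 0) :
    ∃ w, Rep φ id y w ∧ ⟪v, w⟫ = 0 ∧ ∀ t : ℝ, Eqv (φ (t • M x y)) (t • M v w) := by
  obtain ⟨w₀, hw₀⟩ := hφ.exists_rep y hy
  obtain ⟨S, hSS, hSE, hS, hφS⟩ := hφ.exists_symmetry hH hx hw₀ hxy
  obtain ⟨hww, -, hs⟩ := hφ.relations hH hx hw₀ hxy hSS hS hφS 2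
  have hvw₀ := hx.orthogonal hw₀ hφ.1 hH hxy
  have hw₀v := inner_eq_zero_symm.mp hvw₀
  have hs0 : ⟪v, ev S v⟫ = 0 := by
    simp only [id] at hs
    push_cast at hs
    linear_combination hs / (-6)
  set w := ev S v with hw
  have hEv : ev (D v + D w₀) v = v := by
    rw [ev_add, ev_D_self hx.right, ev_D_of_orthogonal hw₀v, add_zero]
  have hSw : ev S w = v := by rw [hw, hSS, hEv]
  have hwl : w = ⟪w₀, w⟫ • w₀ := by
    have h1 : ev (D v + D w₀) w = w := by rw [← hSS, hSw]
    rwa [ev_add, ev_D_of_orthogonal hs0, zero_add, ev_D, eq_comm] at h1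
  set l := ⟪w₀, w⟫ with hl
  have hll : l * (starRingEnd ℂ) l = 1 := by
    have := hww
    rw [hwl, inner_smul_left, inner_smul_right, inner_self_unit hw₀.right] at this
    linear_combination this
  have hD : D w = D w₀ := by
    refine SA.ext fun z => ?_
    rw [ev_D, ev_D, hwl, inner_smul_left]
    linear_combination (norm := module) hll • (⟪w₀, z⟫ • w₀)
  have hSw₀ : ev S w₀ = (starRingEnd ℂ) l • v := by
    rw [← hSw, hwl, ev_map_smul, smul_smul, mul_comm, hll, one_smul]
  have hSM : S = M v w := by
    refine SA.ext fun z => ?_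
    rw [← hSE, ev_M, ev_add, ev_map_add, ev_D, ev_D, ev_map_smul, ev_map_smul, ← hw, hSw₀]
    nth_rw 3 [hwl]
    rw [inner_smul_left]
    module
  refine ⟨w, ⟨hw₀.left, norm_eq_one_of_inner hww, fun t => ?_⟩, hs0, fun t => ?_⟩
  · rw [hD]
    exact hw₀.eqv t
  · rw [← hSM]
    exact hφS t

end IsNormal

lemma D_smul_real (t : ℝ) (x : H) : D ((t : ℂ) • x) = (t ^ 2) • D x := by
  refine SA.ext fun z => ?_
  rw [ev_smul, ev_D, ev_D, inner_smul_left, Complex.conj_ofReal]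
  push_cast
  module

lemma M_smul_right_real (t : ℝ) (x y : H) : M x ((t : ℂ) • y) = t • M x y := by
  refine SA.ext fun z => ?_
  rw [ev_smul, ev_M, ev_M, inner_smul_left, Complex.conj_ofReal]
  module

lemma M_add_right (x y z : H) : M x (y + z) = M x y + M x z := by
  refine SA.ext fun w => ?_
  simp only [ev_add, ev_M, inner_add_left]
  module

lemma Eqv.M_right_injective (hH : Big H) {v w w' : H} (hv : ‖v‖ = 1) (hw : ⟪v, w⟫ = 0)
    (hw' : ⟪v, w'⟫ = 0) (h : Eqv (M v w) (M v w')) : w = w' := by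
  obtain ⟨z, hz, hvz, hwz⟩ := hH v (w - w')
  have h1 : M v w = M v w' := by
    refine h.eq (ne_zero_of_unit hz) ?_
    rw [inner_sub_left, sub_eq_zero] at hwz
    rw [ev_M, ev_M, hvz, hwz, zero_smul, zero_smul]
  have h2 := congrArg (fun T => ev T v) h1
  simpa only [ev_M, inner_self_unit hv, inner_eq_zero_symm.mp hw, inner_eq_zero_symm.mp hw',
    one_smul, zero_smul, add_zero] using h2

lemma Eqv.D_eq (hH : Big H) {v w : H} (h : Eqv (D v) (D w)) : D v = D w := by
  obtain ⟨z, hz, hvz, hwz⟩ := hH v w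
  exact h.eq (ne_zero_of_unit hz) (by rw [ev_D_of_orthogonal hvz, ev_D_of_orthogonal hwz])

/-- The component of `x` orthogonal to the unit vector `e`. -/
def perp (e x : H) : H := x - ⟪e, x⟫ • e

omit [CompleteSpace H] in
lemma inner_perp {e : H} (he : ‖e‖ = 1) (x : H) : ⟪e, perp e x⟫ = 0 := by
  rw [perp, inner_sub_right, inner_smul_right, inner_self_unit he, mul_one, sub_self]

omit [CompleteSpace H] in
lemma perp_add (e x y : H) : perp e (x + y) = perp e x + perp e y := by
  simp only [perp, inner_add_right]
  module

omit [CompleteSpace H] in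
lemma perp_smul (e : H) (c : ℂ) (x : H) : perp e (c • x) = c • perp e x := by
  simp only [perp, inner_smul_right]
  module

/-- The data describing the images of the operators `M e y` and `D y` for `y` orthogonal to the
unit vector `e`. -/
structure IsFrame (φ : SA H → SA H) (e v : H) (N : H → H) : Prop where
  rep : Rep φ id e v
  orthogonal : ∀ x, ⟪v, N x⟫ = 0
  norm : ∀ x, ‖N x‖ = ‖perp e x‖
  eqv_D : ∀ x, Eqv (φ (D (perp e x))) (D (N x))
  eqv_M : ∀ x, ∀ t : ℝ, Eqv (φ (t • M e (perp e x))) (t • M v (N x))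

lemma IsNormal.exists_frame {φ : SA H → SA H} (hφ : IsNormal φ id) (hH : Big H) :
    ∃ e v N, IsFrame φ e v N := by
  obtain ⟨e, he, -⟩ := hH.single 0
  obtain ⟨v, hv⟩ := hφ.exists_rep e he
  have h : ∀ x, ∃ w, ⟪v, w⟫ = 0 ∧ ‖w‖ = ‖perp e x‖ ∧ Eqv (φ (D (perp e x))) (D w) ∧
      ∀ t : ℝ, Eqv (φ (t • M e (perp e x))) (t • M v w) := by
    intro x
    by_cases hx : perp e x = 0
    · have hD : D (0 : H) = (0 : SA H) := SA.ext fun z => by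
        rw [ev_D, smul_zero, ev_zero]
      have hM : ∀ y : H, M y 0 = (0 : SA H) := fun y => SA.ext fun z => by
        rw [ev_M, inner_zero_left, zero_smul, smul_zero, zero_add, ev_zero]
      have h0 : φ 0 = 0 := by
        have := hφ.sub 0 0
        rwa [sub_self, sub_self] at this
      refine ⟨0, inner_zero_right _, by rw [hx], ?_, fun t => ?_⟩
      · rw [hx, hD, h0]
        exact Eqv.refl _
      · have hs : t • (0 : SA H) = 0 := smul_zero t
        rw [hx, hM, hM, hs, h0]
        exact Eqv.refl _
    · set r := ‖perp e x‖ with hr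
      have hr0 : r ≠ 0 := norm_ne_zero_iff.mpr hx
      have hrc : (r : ℂ) ≠ 0 := by exact_mod_cast hr0
      obtain ⟨y, hy, hey, hxy⟩ : ∃ y, ‖y‖ = 1 ∧ ⟪e, y⟫ = 0 ∧ perp e x = (r : ℂ) • y := by
        refine ⟨((r⁻¹ : ℝ) : ℂ) • perp e x, ?_, ?_, ?_⟩
        · rw [norm_smul, Complex.norm_real, norm_inv, hr, norm_norm, inv_mul_cancel₀ hr0]
        · rw [inner_smul_right, inner_perp he, mul_zero]
        · rw [smul_smul]
          push_cast
          rw [mul_inv_cancel₀ hrc, one_smul]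
      obtain ⟨w, hw, hvw, hM⟩ := hφ.exists_M_of_unit hH hv hy hey
      refine ⟨(r : ℂ) • w, by rw [inner_smul_right, hvw, mul_zero], ?_, ?_, fun t => ?_⟩
      · rw [norm_smul, hw.right, Complex.norm_real, hr, norm_norm, mul_one]
      · rw [hxy, D_smul_real, D_smul_real]
        exact hw.eqv (r ^ 2)
      · rw [hxy, M_smul_right_real, M_smul_right_real, smul_smul, smul_smul]
        exact hM (t * r)
  choose N h1 h2 h3 h4 using h
  exact ⟨e, v, N, hv, h1, h2, h3, h4⟩

namespace IsFrame

variable {φ : SA H → SA H} {e v : H} {N : H → H}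

lemma map_add (h : IsFrame φ e v N) (hφ : IsCommPres φ) (hH : Big H) (x y : H) :
    N (x + y) = N x + N y := by
  refine Eqv.M_right_injective hH h.rep.right (h.orthogonal _)
    (by rw [inner_add_right, h.orthogonal, h.orthogonal, add_zero]) ?_
  have h1 := h.eqv_M (x + y) 1
  have h2 := (h.eqv_M x 1).add (h.eqv_M y 1)
  simp only [one_smul] at h1 h2
  rw [← hφ.add, ← M_add_right, ← perp_add, ← M_add_right] at h2
  exact h1.symm.trans h2

lemma map_smul_real (h : IsFrame φ e v N) (hH : Big H) (t : ℝ) (x : H) :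
    N ((t : ℂ) • x) = (t : ℂ) • N x := by
  refine Eqv.M_right_injective hH h.rep.right (h.orthogonal _)
    (by rw [inner_smul_right, h.orthogonal, mul_zero]) ?_
  have h1 := h.eqv_M ((t : ℂ) • x) 1
  rw [one_smul, one_smul, perp_smul, M_smul_right_real] at h1
  rw [M_smul_right_real]
  exact h1.symm.trans (h.eqv_M x t)

lemma map_I_smul_or (h : IsFrame φ e v N) (hφ : IsNormal φ id) (hH : Big H) (x : H) :
    N (Complex.I • x) = Complex.I • N x ∨ N (Complex.I • x) = -(Complex.I • N x) := by
  by_cases hx : N x = 0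
  · left
    have h1 : perp e x = 0 := by rw [← norm_eq_zero, ← h.norm, hx, norm_zero]
    rw [hx, smul_zero, ← norm_eq_zero, h.norm, perp_smul, h1, smul_zero, norm_zero]
  have hxx : ⟪N x, N x⟫ ≠ 0 := inner_self_ne_zero.mpr hx
  have hI : D (N (Complex.I • x)) = D (N x) := by
    refine Eqv.D_eq hH ((h.eqv_D _).symm.trans (Eqv.trans ?_ (h.eqv_D x)))
    rw [perp_smul]
    rw [show D (Complex.I • perp e x) = D (perp e x) from SA.ext fun z => by
      rw [ev_D, ev_D, inner_smul_left, Complex.conj_I]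
      linear_combination (norm := module) -Complex.I_mul_I • (⟪perp e x, z⟫ • perp e x)]
    exact Eqv.refl _
  have hII : D (N (x + Complex.I • x)) = (2 : ℝ) • D (N x) := by
    obtain ⟨z, hz, hz1, hz2⟩ := hH (N (x + Complex.I • x)) (N x)
    refine Eqv.eq (z := z) ?_ (ne_zero_of_unit hz) ?_
    · have h2 : D (perp e (x + Complex.I • x)) = D (perp e x) + D (perp e x) := by
        rw [perp_add, perp_smul]
        refine SA.ext fun z => ?_
        simp only [ev_add, ev_D, inner_add_left, inner_smul_left, Complex.conj_I]
        linear_combination (norm := module) -Complex.I_mul_I • (⟪perp e x, z⟫ • perp e x)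
      refine (h.eqv_D _).symm.trans ?_
      rw [h2, hφ.add, two_smul]
      exact (h.eqv_D x).add (h.eqv_D x)
    · rw [ev_smul, ev_D_of_orthogonal hz1, ev_D_of_orthogonal hz2, smul_zero]
  obtain ⟨c, hc⟩ : ∃ c : ℂ, N (Complex.I • x) = c • N x := by
    have h1 : ⟪N (Complex.I • x), N x⟫ • N (Complex.I • x) = ⟪N x, N x⟫ • N x := by
      rw [← ev_D, ← ev_D, hI]
    have h2 : ⟪N (Complex.I • x), N x⟫ ≠ 0 := by
      intro h0
      rw [h0, zero_smul, eq_comm, smul_eq_zero] at h1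
      exact hx (h1.resolve_left hxx)
    refine ⟨⟪N (Complex.I • x), N x⟫⁻¹ * ⟪N x, N x⟫, ?_⟩
    rw [mul_smul, ← h1, inv_smul_smul₀ h2]
  rw [h.map_add hφ.1 hH] at hII
  rw [hc] at hI hII
  have e1 := congrArg (fun T => ⟪N x, ev T (N x)⟫) hI
  have e2 := congrArg (fun T => ⟪N x, ev T (N x)⟫) hII
  simp only [ev_smul, ev_D, inner_add_left, inner_add_right, inner_smul_left,
    inner_smul_right] at e1 e2
  have e1' : (starRingEnd ℂ) c * c = 1 := by
    refine mul_right_cancel₀ hxx (mul_right_cancel₀ hxx ?_)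
    linear_combination e1
  have e2' : (1 + (starRingEnd ℂ) c) * (1 + c) = 2 := by
    refine mul_right_cancel₀ hxx (mul_right_cancel₀ hxx ?_)
    push_cast at e2
    linear_combination e2
  have e3 : (c - Complex.I) * (c + Complex.I) = 0 := by
    linear_combination c * e2' - (1 + c) * e1' - Complex.I_mul_I
  rw [hc]
  rcases mul_eq_zero.mp e3 with h0 | h0
  · left
    rw [sub_eq_zero.mp h0]
  · right
    rw [eq_neg_of_add_eq_zero_left h0, neg_smul]

lemma map_I_smul (h : IsFrame φ e v N) (hφ : IsNormal φ id) (hH : Big H) :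
    (∀ x, N (Complex.I • x) = Complex.I • N x) ∨
      ∀ x, N (Complex.I • x) = -(Complex.I • N x) := by
  by_contra! hcon
  obtain ⟨⟨x, hx⟩, y, hy⟩ := hcon
  have hx' := (h.map_I_smul_or hφ hH x).resolve_left hx
  have hy' := (h.map_I_smul_or hφ hH y).resolve_right hy
  rcases h.map_I_smul_or hφ hH (x + y) with hxy | hxy
  · apply hx
    rw [smul_add, h.map_add hφ.1 hH, h.map_add hφ.1 hH, hy', smul_add] at hxy
    exact add_right_cancel hxy
  · apply hy
    rw [smul_add, h.map_add hφ.1 hH, h.map_add hφ.1 hH, hx', smul_add, neg_add] at hxy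
    exact add_left_cancel hxy

/-- The map `N` is either linear or conjugate-linear. -/
lemma map_smul (h : IsFrame φ e v N) (hφ : IsNormal φ id) (hH : Big H) :
    ∃ σ : ℂ →+* ℂ, (σ = RingHom.id ℂ ∨ σ = starRingEnd ℂ) ∧ ∀ (c : ℂ) x, N (c • x) = σ c • N x := by
  have hdec : ∀ (c : ℂ) x, N (c • x) = (c.re : ℂ) • N x + (c.im : ℂ) • N (Complex.I • x) := by
    intro c x
    rw [← h.map_smul_real hH, ← h.map_smul_real hH, ← h.map_add hφ.1 hH, smul_smul, ← add_smul,
      Complex.re_add_im]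
  rcases h.map_I_smul hφ hH with hI | hI
  · refine ⟨RingHom.id ℂ, Or.inl rfl, fun c x => ?_⟩
    rw [hdec, hI, smul_smul, ← add_smul, Complex.re_add_im, RingHom.id_apply]
  · refine ⟨starRingEnd ℂ, Or.inr rfl, fun c x => ?_⟩
    rw [hdec, hI, smul_neg, smul_smul, ← sub_eq_add_neg, ← sub_smul]
    congr 1
    apply Complex.ext <;> simp

end IsFrame

/-- A bijective semilinear isometry `U` implementing `φ` on operators of rank one, modulo
scalars. -/
structure Implements (φ : SA H → SA H) (σ : ℂ →+* ℂ) (U : H → H) : Prop where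
  map_add : ∀ x y, U (x + y) = U x + U y
  map_smul : ∀ (c : ℂ) x, U (c • x) = σ c • U x
  norm_map : ∀ x, ‖U x‖ = ‖x‖
  surj : Function.Surjective U
  eqv : ∀ x, Eqv (φ (D x)) (D (U x))

/-- The identity and the conjugation are the continuous automorphisms of `ℂ`. -/
def IsIdOrConj (σ : ℂ →+* ℂ) : Prop := σ = RingHom.id ℂ ∨ σ = starRingEnd ℂ

namespace IsIdOrConj

variable {σ : ℂ →+* ℂ}

lemma apply_apply (hσ : IsIdOrConj σ) (c : ℂ) : σ (σ c) = c := by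
  rcases hσ with rfl | rfl <;> simp

lemma apply_conj (hσ : IsIdOrConj σ) (c : ℂ) : σ ((starRingEnd ℂ) c) = (starRingEnd ℂ) (σ c) := by
  rcases hσ with rfl | rfl <;> simp

lemma apply_real (hσ : IsIdOrConj σ) (r : ℝ) : σ r = r := by
  rcases hσ with rfl | rfl <;> simp

lemma norm_apply (hσ : IsIdOrConj σ) (c : ℂ) : ‖σ c‖ = ‖c‖ := by
  rcases hσ with rfl | rfl <;> simp

lemma surjective (hσ : IsIdOrConj σ) : Function.Surjective σ := fun c => ⟨σ c, hσ.apply_apply c⟩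

end IsIdOrConj

lemma D_smul_add (c : ℂ) (x y : H) :
    D (c • x + y) = D (c • x) + M x ((starRingEnd ℂ) c • y) + D y := by
  refine SA.ext fun z => ?_
  simp only [ev_add, ev_D, ev_M, inner_add_left, inner_smul_left, Complex.conj_conj]
  module

lemma D_smul (c : ℂ) (x : H) : D (c • x) = (‖c‖ ^ 2) • D x := by
  refine SA.ext fun z => ?_
  rw [ev_smul, ev_D, ev_D, inner_smul_left]
  push_cast
  rw [← Complex.conj_mul']
  module

omit [CompleteSpace H] in
lemma perp_add_eq (e x : H) : ⟪e, x⟫ • e + perp e x = x := add_sub_cancel _ _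

omit [CompleteSpace H] in
lemma norm_add_sq_of_orthogonal {x y : H} (h : ⟪x, y⟫ = 0) :
    ‖x + y‖ ^ 2 = ‖x‖ ^ 2 + ‖y‖ ^ 2 := by
  rw [@norm_add_sq ℂ, h]
  simp

namespace IsFrame

variable {φ : SA H → SA H} {e v : H} {N : H → H} {σ : ℂ →+* ℂ}

lemma norm_map (h : IsFrame φ e v N) (hσ : IsIdOrConj σ) (x : H) :
    ‖σ ⟪e, x⟫ • v + N x‖ = ‖x‖ := by
  have h1 : ‖σ ⟪e, x⟫ • v + N x‖ ^ 2 = ‖x‖ ^ 2 := by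
    conv_rhs => rw [← perp_add_eq e x]
    rw [norm_add_sq_of_orthogonal, norm_add_sq_of_orthogonal, norm_smul, norm_smul, h.norm,
      hσ.norm_apply,
      h.rep.left, h.rep.right]
    · rw [inner_smul_left, inner_perp h.rep.left, mul_zero]
    · rw [inner_smul_left, h.orthogonal, mul_zero]
  exact (sq_eq_sq₀ (norm_nonneg _) (norm_nonneg _)).mp h1

lemma eqv_map (h : IsFrame φ e v N) (hφ : IsCommPres φ) (hσ : IsIdOrConj σ)
    (hN : ∀ (c : ℂ) x, N (c • x) = σ c • N x) (x : H) :
    Eqv (φ (D x)) (D (σ ⟪e, x⟫ • v + N x)) := by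
  have h1 := h.eqv_M ((starRingEnd ℂ) ⟪e, x⟫ • x) 1
  rw [one_smul, one_smul, hN, hσ.apply_conj, perp_smul] at h1
  conv_lhs => rw [← perp_add_eq e x]
  rw [D_smul_add, D_smul_add, hφ.add, hφ.add]
  refine Eqv.add (Eqv.add ?_ h1) (h.eqv_D x)
  rw [D_smul, D_smul, hσ.norm_apply]
  exact h.rep.eqv _

end IsFrame

lemma IsNormal.exists_smul_eq {φ : SA H → SA H} (hφ : IsNormal φ id) (hH : Big H) {U : H → H}
    (hU : ∀ x, Eqv (φ (D x)) (D (U x))) (w : H) : ∃ (c : ℂ) (x : H), w = c • U x := by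
  by_cases hw : w = 0
  · exact ⟨0, 0, by rw [hw, zero_smul]⟩
  obtain ⟨c, hc, hc0⟩ := exists_unit_smul hw
  obtain ⟨A, hA⟩ := hφ.surj (D (c • w))
  have hR : RankOneLike (φ A) :=
    ⟨c • w, 1, 0, hc, one_ne_zero, by rw [hA, one_smul, zero_smul, add_zero]⟩
  obtain ⟨x, a, b, hx, -, rfl⟩ := (hφ.rankOneLike_iff hH).mp hR
  obtain ⟨v, hv⟩ := hφ.exists_rep x hx
  have h1 : D v = D (U x) := by
    have := hv.eqv 1
    rw [one_smul, id, one_smul] at this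
    exact Eqv.D_eq hH (this.symm.trans (hU x))
  have h2 : Eqv (D (c • w)) (a • D (U x)) := by
    rw [← hA, ← h1]
    exact (hφ.eqv ⟨b, rfl⟩).trans (hv.eqv a)
  obtain ⟨z, hz, hwz, hxz⟩ := hH (c • w) (U x)
  have h3 := congrArg (fun T => ev T (c • w)) (h2.eq (ne_zero_of_unit hz)
    (by rw [ev_smul, ev_D_of_orthogonal hwz, ev_D_of_orthogonal hxz, smul_zero]))
  rw [ev_D_self hc, ev_smul, ev_D, smul_smul] at h3
  exact ⟨c⁻¹ * (a * ⟪U x, c • w⟫), x, by rw [mul_smul, ← h3, inv_smul_smul₀ hc0]⟩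

lemma IsNormal.exists_implements {φ : SA H → SA H} (hφ : IsNormal φ id) (hH : Big H) :
    ∃ σ U, IsIdOrConj σ ∧ Implements φ σ U := by
  obtain ⟨e, v, N, h⟩ := hφ.exists_frame hH
  obtain ⟨σ, hσ, hN⟩ := h.map_smul hφ hH
  replace hσ : IsIdOrConj σ := hσ
  have hsmul : ∀ (c : ℂ) (x : H),
      σ ⟪e, c • x⟫ • v + N (c • x) = σ c • (σ ⟪e, x⟫ • v + N x) := fun c x => by
    rw [inner_smul_right, hN, _root_.map_mul, smul_add, mul_smul]
  refine ⟨σ, fun x => σ ⟪e, x⟫ • v + N x, hσ, fun x y => ?_, hsmul, h.norm_map hσ, fun w => ?_,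
    h.eqv_map hφ.1 hσ hN⟩
  · simp only [inner_add_right, _root_.map_add, h.map_add hφ.1 hH]
    module
  · obtain ⟨c, x, hc⟩ := hφ.exists_smul_eq hH (h.eqv_map hφ.1 hσ hN) w
    exact ⟨σ c • x, by simp only [hsmul, hσ.apply_apply, ← hc]⟩

namespace Implements

variable {φ : SA H → SA H} {σ : ℂ →+* ℂ} {U : H → H}

lemma map_zero (h : Implements φ σ U) : U 0 = 0 := by
  simpa using h.map_smul 0 0

lemma map_neg (h : Implements φ σ U) (x : H) : U (-x) = -U x := by
  simpa using h.map_smul (-1) x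

lemma injective (h : Implements φ σ U) : Function.Injective U := by
  intro x y hxy
  rw [← sub_eq_zero, ← norm_eq_zero, ← h.norm_map, sub_eq_add_neg, h.map_add, h.map_neg, hxy,
    add_neg_cancel, norm_zero]

lemma re_inner (h : Implements φ σ U) (x y : H) : (⟪U x, U y⟫).re = (⟪x, y⟫).re := by
  have h1 := @norm_add_sq ℂ _ _ _ _ x y
  have h2 := @norm_add_sq ℂ _ _ _ _ (U x) (U y)
  rw [← h.map_add, h.norm_map, h.norm_map, h.norm_map] at h2
  simp only [RCLike.re_eq_complex_re] at h1 h2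
  linarith

lemma inner_map (h : Implements φ σ U) (hσ : IsIdOrConj σ) (x y : H) :
    ⟪U x, U y⟫ = σ ⟪x, y⟫ := by
  have h1 := h.re_inner x y
  have h2 := h.re_inner x (Complex.I • y)
  rw [h.map_smul, inner_smul_right, inner_smul_right] at h2
  generalize ⟪U x, U y⟫ = c at *
  generalize ⟪x, y⟫ = d at *
  apply Complex.ext
  · rcases hσ with rfl | rfl <;> simpa using h1
  · rcases hσ with rfl | rfl
    · simpa using h2
    · simp at h2 ⊢
      linarith

lemma eigen_of_unit (h : Implements φ σ U) (hφ : IsCommPres φ) (hσ : IsIdOrConj σ) (A : SA H)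
    {x : H} (hx : ‖x‖ = 1) :
    ∃ r : ℝ, ev (φ A) (U x) = U (ev A x) + (r : ℂ) • U x := by
  obtain ⟨ρ, hρ⟩ := Complex.conj_eq_iff_real.mp
    (show (starRingEnd ℂ) ⟪ev A x, x⟫ = ⟪ev A x, x⟫ by rw [inner_conj_symm, ev_symm])
  have hUx : ‖U x‖ = 1 := by rw [h.norm_map, hx]
  have hM : Eqv (φ (M x (-ev A x))) (M (U x) (-U (ev A x))) := by
    unfold M
    rw [hφ.sub, hφ.sub, ← h.map_neg, ← h.map_add]
    exact ((h.eqv _).sub (h.eqv _)).sub (h.eqv _)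
  have hcomm : CommC (A + M x (-ev A x)) (D x) := by
    refine (commC_D_iff _ _).mpr ⟨-ρ, ?_⟩
    rw [ev_add, ev_M, inner_self_unit hx, inner_neg_left, hρ]
    push_cast
    module
  have h1 := (h.eqv x).symm.commC (CommC.symm' ((hφ.comm _ _).mp hcomm))
  obtain ⟨r, hr⟩ := (commC_D_iff _ _).mp (CommC.symm' h1)
  obtain ⟨s, hs⟩ := eqv_iff.mp hM
  rw [hφ.add, ev_add, hs, ev_M, inner_self_unit hUx, inner_neg_left, h.inner_map hσ, hρ,
    hσ.apply_real] at hr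
  refine ⟨r - s + ρ, ?_⟩
  push_cast
  linear_combination (norm := module) hr

lemma exists_real (h : Implements φ σ U) (hφ : IsCommPres φ) (hσ : IsIdOrConj σ) (A : SA H) :
    ∃ r : ℝ, ∀ x, ev (φ A) (U x) = U (ev A x) + (r : ℂ) • U x := by
  have h1 : ∀ x : H, ∃ r : ℝ, ev (φ A) (U x) - U (ev A x) = (r : ℂ) • U x := by
    intro x
    by_cases hx : x = 0
    · exact ⟨0, by rw [hx, ev_map_zero, h.map_zero, ev_map_zero, sub_self, smul_zero]⟩
    obtain ⟨c, hc, hc0⟩ := exists_unit_smul hx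
    obtain ⟨r, hr⟩ := h.eigen_of_unit hφ hσ A hc
    refine ⟨r, smul_right_injective H ((_root_.map_ne_zero σ).mpr hc0) ?_⟩
    rw [ev_map_smul, h.map_smul, h.map_smul, ev_map_smul] at hr
    linear_combination (norm := module) hr
  obtain ⟨r, hr⟩ := exists_scalar hσ.surjective (T := fun x => ev (φ A) (U x) - U (ev A x))
    (fun x y => by
      simp only [h.map_add, ev_map_add]
      abel)
    (fun c x => by simp only [h.map_smul, ev_map_smul, smul_sub]) h.map_add h.map_smul h.injective ⊤
    (fun x _ => h1 x)
  exact ⟨r, fun x => eq_add_of_sub_eq' (hr x trivial)⟩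

end Implements

lemma IsCommPres.smul {φ : SA H → SA H} (hφ : IsCommPres φ) {c : ℝ} (hc : c ≠ 0) :
    IsCommPres fun A => c • φ A where
  add A B := by rw [hφ.add, smul_add]
  surj A := by
    obtain ⟨B, hB⟩ := hφ.surj (c⁻¹ • A)
    exact ⟨B, by simp only [hB, smul_inv_smul₀ hc]⟩
  comm A B := by
    have hc' : (c : ℂ) ≠ 0 := by exact_mod_cast hc
    rw [hφ.comm, CommPres.commC_iff, CommPres.commC_iff]
    refine forall_congr' fun x => ?_
    simp only [ev_smul, ev_map_smul]
    rw [(smul_right_injective H hc').eq_iff, (smul_right_injective H hc').eq_iff]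

lemma IsCommPres.exists_normal {φ : SA H → SA H} (hφ : IsCommPres φ) (hH : Big H) :
    ∃ c : ℝ, c ≠ 0 ∧ IsNormal (fun A => c⁻¹ • φ A) id := by
  obtain ⟨a, hadd, ha, hrep⟩ := hφ.exists_common hH
  refine ⟨a 1, ha, ?_⟩
  have h : IsNormal (fun A => (a 1)⁻¹ • φ A) fun t => (a 1)⁻¹ * a t :=
    { toIsCommPres := hφ.smul (inv_ne_zero ha)
      map_add := fun s t => by rw [hadd, mul_add]
      map_one := inv_mul_cancel₀ ha
      exists_rep := fun x hx => by
        obtain ⟨v, hv⟩ := hrep x hx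
        refine ⟨v, hv.left, hv.right, fun t => ?_⟩
        rw [mul_smul]
        exact (hv.eqv t).smul _ }
  rwa [h.eq_id hH] at h

theorem IsCommPres.exists_form {φ : SA H → SA H} (hφ : IsCommPres φ) (hH : Big H) :
    ∃ c : ℝ, c ≠ 0 ∧ ∃ g : SA H → ℝ, (∀ A B, g (A + B) = g A + g B) ∧
      ∃ (σ : ℂ →+* ℂ) (U : H → H), IsIdOrConj σ ∧ (∀ x y, U (x + y) = U x + U y) ∧
        (∀ (c : ℂ) x, U (c • x) = σ c • U x) ∧ (∀ x, ‖U x‖ = ‖x‖) ∧ Function.Surjective U ∧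
        ∀ A x, ev (φ A) (U x) = (c : ℂ) • U (ev A x) + (g A : ℂ) • U x := by
  obtain ⟨c, hc, hψ⟩ := hφ.exists_normal hH
  obtain ⟨σ, U, hσ, hU⟩ := hψ.exists_implements hH
  choose r hr using hU.exists_real hψ.1 hσ
  have hc' : (c : ℂ) ≠ 0 := by exact_mod_cast hc
  have key : ∀ A x, ev (φ A) (U x) = (c : ℂ) • U (ev A x) + ((c * r A : ℝ) : ℂ) • U x := by
    intro A x
    have := hr A x
    rw [ev_smul, Complex.ofReal_inv, inv_smul_eq_iff₀ hc', smul_add, smul_smul] at this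
    rw [this, Complex.ofReal_mul]
  refine ⟨c, hc, fun A => c * r A, fun A B => ?_, σ, U, hσ, hU.map_add, hU.map_smul, hU.norm_map,
    hU.surj, key⟩
  obtain ⟨z, hz, -⟩ := hH.single 0
  have hUz : U z ≠ 0 := ne_zero_of_unit (by rw [hU.norm_map, hz])
  have h1 := key (A + B) z
  rw [hφ.add, ev_add, ev_add, hU.map_add, key, key] at h1
  have h2 : (((c * r (A + B) : ℝ) : ℂ) - ((c * r A : ℝ) + (c * r B : ℝ))) • U z = 0 := by
    linear_combination (norm := module) -h1
  have h3 := sub_eq_zero.mp ((smul_eq_zero.mp h2).resolve_right hUz)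
  exact_mod_cast h3

end CommPres

theorem stmt1
    (hdim : 3 ≤ Module.rank ℂ H)
    (φ : selfAdjoint (H →L[ℂ] H) → selfAdjoint (H →L[ℂ] H))
    (hadd : ∀ A B : selfAdjoint (H →L[ℂ] H), φ (A + B) = φ A + φ B)
    (hsurj : Function.Surjective φ)
    (hpres : ∀ A B : selfAdjoint (H →L[ℂ] H), CommC A B ↔ CommC (φ A) (φ B)) :
    ∃ c : ℝ, c ≠ 0 ∧ ∃ g : selfAdjoint (H →L[ℂ] H) → ℝ,
      (∀ A B : selfAdjoint (H →L[ℂ] H), g (A + B) = g A + g B) ∧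
      ((∃ U : H ≃ₗᵢ[ℂ] H, ∀ (A : selfAdjoint (H →L[ℂ] H)) (x : H),
          (φ A : H →L[ℂ] H) x = (c : ℂ) • U ((A : H →L[ℂ] H) (U.symm x)) + (g A : ℂ) • x) ∨
       (∃ U : H ≃ₗᵢ⋆[ℂ] H, ∀ (A : selfAdjoint (H →L[ℂ] H)) (x : H),
          (φ A : H →L[ℂ] H) x = (c : ℂ) • U ((A : H →L[ℂ] H) (U.symm x)) + (g A : ℂ) • x)) := by
  obtain ⟨c, hc, g, hg, σ, U, hσ, hU, hU', hn, hs, key⟩ :=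
    CommPres.IsCommPres.exists_form ⟨hadd, hsurj, hpres⟩ (CommPres.big_of_rank hdim)
  refine ⟨c, hc, g, hg, ?_⟩
  rcases hσ with rfl | rfl
  · left
    let V : H ≃ₗᵢ[ℂ] H := LinearIsometryEquiv.ofSurjective
      { toFun := U, map_add' := hU, map_smul' := hU', norm_map' := hn } hs
    refine ⟨V, fun A x => ?_⟩
    have h := key A (V.symm x)
    rwa [show U (V.symm x) = x from V.apply_symm_apply x] at h
  · right
    let V : H ≃ₗᵢ⋆[ℂ] H := LinearIsometryEquiv.ofSurjective
      { toFun := U, map_add' := hU, map_smul' := hU', norm_map' := hn } hs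
    refine ⟨V, fun A x => ?_⟩
    have h := key A (V.symm x)
    rwa [show U (V.symm x) = x from V.apply_symm_apply x] at h
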